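/- arXiv:2211.04953 — 4 statements merged into one kernel-verified Lean document; each statement's English description precedes it below -/
import Mathlib

section
/- Let r₀ > 0 and let f be a holomorphic function on the polydisc D = {w ∈ ℂⁿ : |w_j| < r₀ for all j} with Taylor expansion f(w) = Σ_{α ∈ (ℤ_{≥0})ⁿ} b_α w^α. Then |f|² e^{−ψ} is Lebesgue integrable on some neighborhood of the origin of ℂⁿ if and only if Σ_{j=1}^n (α_j+1)/p_j > 1 holds for every multi-index α ∈ (ℤ_{≥0})ⁿ with b_α ≠ 0. -/
open MeasureTheory Filter

/-- `psi p w = max_j 2 p_j log |w_j|`. -/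
noncomputable def psi {n : ℕ} (p : Fin n → ℝ) (w : Fin n → ℂ) : ℝ :=
  ⨆ j, 2 * p j * Real.log ‖w j‖

lemma le_psi {n : ℕ} (p : Fin n → ℝ) (w : Fin n → ℂ) (j : Fin n) :
    2 * p j * Real.log ‖w j‖ ≤ psi p w :=
  le_ciSup (f := fun j => 2 * p j * Real.log ‖w j‖) (Set.finite_range _).bddAbove j

lemma measurable_psi {n : ℕ} (p : Fin n → ℝ) : Measurable (psi p) := by
  unfold psi
  refine Measurable.iSup fun j => ?_
  fun_prop

lemma ae_ne_zero (n : ℕ) : ∀ᵐ w : Fin n → ℂ, ∀ j, w j ≠ 0 := by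
  rw [ae_all_iff]
  intro j
  exact Measure.ae_eval_ne (μ := fun _ : Fin n => (volume : Measure ℂ)) j 0

lemma polydisc_eq {n : ℕ} (r : ℝ) : {w : Fin n → ℂ | ∀ j, ‖w j‖ < r} =
    Set.univ.pi (fun _ => Metric.ball (0 : ℂ) r) := by
  ext w; simp

lemma integrable_model {n : ℕ} (r τ : ℝ) (hτ : τ < 2) :
    IntegrableOn (fun w : Fin n → ℂ => ∏ j, ‖w j‖ ^ (-τ)) {w | ∀ j, ‖w j‖ < r} volume := by
  rw [polydisc_eq, IntegrableOn, volume_pi, Measure.restrict_pi_pi]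
  refine Integrable.fintype_prod (f := fun _ (z : ℂ) => ‖z‖ ^ (-τ)) fun j => ?_
  refine integrableOn_ball_of_norm_le_rpow (C := 1) (α := τ) (by simp) (by simpa using hτ) ?_ ?_
  · refine Eventually.of_forall fun z => ?_
    rw [one_mul, Real.norm_of_nonneg (by positivity)]
  · exact (by fun_prop : Measurable fun z : ℂ => ‖z‖ ^ (-τ)).aestronglyMeasurable

lemma exists_eps {n : ℕ} (p : Fin n → ℝ) (hp : ∀ j, 0 < p j) (σ : ℝ) (hσ : 0 < σ) :
    ∃ ε : ℝ, 0 < ε ∧ ε ≤ σ ∧ ∀ α : Fin n → ℕ, 1 < ∑ j, ((α j : ℝ) + 1) / p j →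
      1 + ε ≤ ∑ j, ((α j : ℝ) + 1) / p j := by
  let T : Finset (Fin n → ℕ) := Fintype.piFinset fun j => Finset.range (⌈2 * p j⌉₊ + 1)
  have h1 : ∀ᶠ ε : ℝ in nhdsWithin 0 (Set.Ioi 0), ∀ α ∈ T, 1 < ∑ j, ((α j : ℝ) + 1) / p j →
      1 + ε ≤ ∑ j, ((α j : ℝ) + 1) / p j := by
    rw [eventually_all_finset]
    intro α _
    by_cases h : 1 < ∑ j, ((α j : ℝ) + 1) / p j
    · have : ∀ᶠ ε : ℝ in nhds 0, ε < ∑ j, ((α j : ℝ) + 1) / p j - 1 :=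
        eventually_lt_nhds (by linarith)
      filter_upwards [nhdsWithin_le_nhds this] with ε hε _
      linarith
    · simp [h]
  have h2 : ∀ᶠ ε : ℝ in nhdsWithin 0 (Set.Ioi 0), ε < σ :=
    nhdsWithin_le_nhds (eventually_lt_nhds hσ)
  have h3 : ∀ᶠ ε : ℝ in nhdsWithin 0 (Set.Ioi 0), ε < 1 :=
    nhdsWithin_le_nhds (eventually_lt_nhds one_pos)
  obtain ⟨ε, h1, h2, h3, h4⟩ := (h1.and (h2.and (h3.and self_mem_nhdsWithin))).exists
  refine ⟨ε, h4, h2.le, fun α hα => ?_⟩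
  by_cases hT : α ∈ T
  · exact h1 α hT hα
  · simp only [T, Fintype.mem_piFinset, Finset.mem_range, not_forall, not_lt] at hT
    obtain ⟨j, hj⟩ := hT
    have h5 : 2 * p j ≤ α j := by
      have := Nat.le_ceil (2 * p j)
      have h6 : ((⌈2 * p j⌉₊ + 1 : ℕ) : ℝ) ≤ α j := by exact_mod_cast hj
      push_cast at h6
      linarith
    have h7 : (2 : ℝ) ≤ ((α j : ℝ) + 1) / p j := by
      rw [le_div_iff₀ (hp j)]; linarith
    have h8 : ((α j : ℝ) + 1) / p j ≤ ∑ j, ((α j : ℝ) + 1) / p j :=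
      Finset.single_le_sum (f := fun j => ((α j : ℝ) + 1) / p j)
        (fun i _ => div_nonneg (by positivity) (hp i).le) (Finset.mem_univ j)
    linarith

lemma summable_at {n : ℕ} {r₀ r : ℝ} (hr : 0 < r) (hrr : r < r₀) {f : (Fin n → ℂ) → ℂ}
    {b : (Fin n → ℕ) → ℂ}
    (hTaylor : ∀ w ∈ {w : Fin n → ℂ | ∀ j, ‖w j‖ < r₀},
      HasSum (fun α : Fin n → ℕ => b α * ∏ j, (w j) ^ (α j)) (f w)) :
    Summable (fun α : Fin n → ℕ => ‖b α‖ * ∏ j, r ^ (α j)) := by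
  have h := (hTaylor (fun _ => (r : ℂ)) (by intro j; simpa [abs_of_pos hr] using hrr)).summable.norm
  refine h.congr fun α => ?_
  simp [abs_of_pos hr]

lemma upper_bound {n : ℕ} (hn : 0 < n) (p : Fin n → ℝ) (hp : ∀ j, 0 < p j) (r : ℝ) (hr : 0 < r)
    (b : (Fin n → ℕ) → ℂ) (hs : Summable (fun α : Fin n → ℕ => ‖b α‖ * ∏ j, r ^ (α j)))
    (σ : ℝ) (hσd : σ = ∑ j, 1 / p j) (hσ : 0 < σ) (ε : ℝ) (hεσ : ε ≤ σ)
    (hb : ∀ α : Fin n → ℕ, b α ≠ 0 → 1 + ε ≤ ∑ j, ((α j : ℝ) + 1) / p j) :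
    ∃ C : ℝ, ∀ (w : Fin n → ℂ) (v : ℂ), (∀ j, w j ≠ 0) → (∀ j, ‖w j‖ < r) →
      HasSum (fun α : Fin n → ℕ => b α * ∏ j, (w j) ^ (α j)) v →
      ‖v‖ ^ 2 * Real.exp (-psi p w) ≤ C * ∏ j, ‖w j‖ ^ (-(2 * (1 - ε / σ))) := by
  set A := ∑' α : Fin n → ℕ, ‖b α‖ * ∏ j, r ^ (α j) with hA
  set D := ∑ j, 2 * p j * |Real.log r| with hD
  refine ⟨A ^ 2 * Real.exp D * ∏ j : Fin n, r ^ (2 * (1 - ε / σ)), ?_⟩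
  intro w v hw0 hwr hv
  have hwpos : ∀ j, 0 < ‖w j‖ := fun j => norm_pos_iff.2 (hw0 j)
  set x : Fin n → ℝ := fun j => Real.log ‖w j‖ - Real.log r with hx
  have hx0 : ∀ j, x j ≤ 0 := fun j => by
    have := Real.log_le_log (hwpos j) (hwr j).le
    simp only [hx]; linarith
  have hwx : ∀ j, ‖w j‖ = r * Real.exp (x j) := fun j => by
    simp only [hx]
    rw [Real.exp_sub, Real.exp_log (hwpos j), Real.exp_log hr]; field_simp
  have : Nonempty (Fin n) := ⟨⟨0, hn⟩⟩
  obtain ⟨k, hk⟩ := Finite.exists_max (fun j => p j * x j)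
  set M := p k * x k with hM
  have hM0 : M ≤ 0 := mul_nonpos_of_nonneg_of_nonpos (hp k).le (hx0 k)
  have hxM : ∀ j, x j ≤ (1 / p j) * M := fun j => by
    rw [one_div, inv_mul_eq_div, le_div_iff₀ (hp j), mul_comm]; exact hk j
  -- bound on terms
  have hterm : ∀ α : Fin n → ℕ, ‖b α * ∏ j, (w j) ^ (α j)‖ ≤
      (‖b α‖ * ∏ j, r ^ (α j)) * Real.exp ((1 - σ + ε) * M) := by
    intro α
    by_cases hbα : b α = 0
    · simp [hbα]
    have h1 : ‖∏ j, (w j) ^ (α j)‖ = (∏ j, r ^ (α j)) * Real.exp (∑ j, α j * x j) := by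
      rw [norm_prod, Real.exp_sum, ← Finset.prod_mul_distrib]
      refine Finset.prod_congr rfl fun j _ => ?_
      rw [norm_pow, hwx, mul_pow, ← Real.exp_nat_mul]
    have h2 : ∑ j, α j * x j ≤ (1 - σ + ε) * M := by
      calc ∑ j, α j * x j ≤ ∑ j, (((α j : ℝ) + 1) / p j - 1 / p j) * M := by
            refine Finset.sum_le_sum fun j _ => ?_
            calc (α j : ℝ) * x j ≤ α j * ((1 / p j) * M) :=
                  mul_le_mul_of_nonneg_left (hxM j) (by positivity)
              _ = _ := by ring
        _ = (∑ j, ((α j : ℝ) + 1) / p j - σ) * M := by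
            rw [← Finset.sum_mul, Finset.sum_sub_distrib, hσd]
        _ ≤ _ := mul_le_mul_of_nonpos_right (by linarith [hb α hbα]) hM0
    rw [norm_mul, h1, mul_assoc]
    gcongr
  have hvle : ‖v‖ ≤ A * Real.exp ((1 - σ + ε) * M) :=
    by
      rw [← hv.tsum_eq, hA, ← tsum_mul_right]
      exact tsum_of_norm_bounded (hs.mul_right _).hasSum hterm
  have hpsi : -psi p w ≤ -2 * M + D := by
    have h1 := le_psi p w k
    have h2 : 2 * p k * |Real.log r| ≤ D :=
      Finset.single_le_sum (f := fun j => 2 * p j * |Real.log r|)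
        (fun j _ => mul_nonneg (mul_nonneg zero_le_two (hp j).le) (abs_nonneg _))
        (Finset.mem_univ k)
    have h3 : -(2 * p k * Real.log r) ≤ 2 * p k * |Real.log r| := by
      have := mul_le_mul_of_nonneg_left (neg_le_abs (Real.log r)) (by linarith [hp k] : 0 ≤ 2 * p k)
      linarith
    have h4 : 2 * M = 2 * p k * Real.log ‖w k‖ - 2 * p k * Real.log r := by
      simp only [hM, hx]; ring
    linarith
  have hsum : ∑ j, x j ≤ σ * M := by
    rw [hσd, Finset.sum_mul]
    exact Finset.sum_le_sum fun j _ => hxM j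
  have hexp : 2 * ((1 - σ + ε) * M) + (-2 * M) ≤ ∑ j, -(2 * (1 - ε / σ)) * x j := by
    rw [← Finset.mul_sum]
    have h1 : 0 ≤ 2 * (1 - ε / σ) := by
      have : ε / σ ≤ 1 := by rw [div_le_one hσ]; exact hεσ
      linarith
    have h2 := mul_le_mul_of_nonneg_left hsum h1
    have h3 : 2 * (1 - ε / σ) * (σ * M) = 2 * (σ - ε) * M := by field_simp
    linarith
  have hprod : Real.exp (∑ j, -(2 * (1 - ε / σ)) * x j) =
      (∏ j : Fin n, r ^ (2 * (1 - ε / σ))) * ∏ j, ‖w j‖ ^ (-(2 * (1 - ε / σ))) := by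
    rw [Real.exp_sum, ← Finset.prod_mul_distrib]
    refine Finset.prod_congr rfl fun j _ => ?_
    rw [Real.rpow_def_of_pos hr, Real.rpow_def_of_pos (hwpos j), ← Real.exp_add]
    congr 1
    simp only [hx]; ring
  calc ‖v‖ ^ 2 * Real.exp (-psi p w)
      ≤ (A * Real.exp ((1 - σ + ε) * M)) ^ 2 * Real.exp (-2 * M + D) := by gcongr
    _ = A ^ 2 * Real.exp D * Real.exp (2 * ((1 - σ + ε) * M) + (-2 * M)) := by
        rw [mul_pow, ← Real.exp_nat_mul, Real.exp_add, Real.exp_add]; push_cast; ring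
    _ ≤ A ^ 2 * Real.exp D * Real.exp (∑ j, -(2 * (1 - ε / σ)) * x j) := by gcongr
    _ = _ := by rw [hprod]; ring

lemma measurableSet_polydisc {n : ℕ} (r : ℝ) :
    MeasurableSet {w : Fin n → ℂ | ∀ j, ‖w j‖ < r} := by
  rw [polydisc_eq]
  exact MeasurableSet.univ_pi fun _ => measurableSet_ball

lemma isOpen_polydisc {n : ℕ} (r : ℝ) :
    IsOpen {w : Fin n → ℂ | ∀ j, ‖w j‖ < r} := by
  rw [polydisc_eq]
  exact isOpen_set_pi Set.finite_univ fun _ _ => Metric.isOpen_ball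

lemma sufficiency (n : ℕ) (hn : 0 < n) (p : Fin n → ℝ) (hp : ∀ j, 0 < p j)
    (r₀ : ℝ) (hr₀ : 0 < r₀) (f : (Fin n → ℂ) → ℂ) (b : (Fin n → ℕ) → ℂ)
    (hf : DifferentiableOn ℂ f {w : Fin n → ℂ | ∀ j, ‖w j‖ < r₀})
    (hTaylor : ∀ w ∈ {w : Fin n → ℂ | ∀ j, ‖w j‖ < r₀},
      HasSum (fun α : Fin n → ℕ => b α * ∏ j, (w j) ^ (α j)) (f w))
    (H : ∀ α : Fin n → ℕ, b α ≠ 0 → 1 < ∑ j, ((α j : ℝ) + 1) / p j) :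
    ∃ U ∈ nhds (0 : Fin n → ℂ), U ⊆ {w : Fin n → ℂ | ∀ j, ‖w j‖ < r₀} ∧
        IntegrableOn (fun w => ‖f w‖ ^ 2 * Real.exp (-psi p w)) U volume := by
  have hr : 0 < r₀ / 2 := by linarith
  have hrr : r₀ / 2 < r₀ := by linarith
  have : Nonempty (Fin n) := ⟨⟨0, hn⟩⟩
  have hσ : 0 < ∑ j, 1 / p j :=
    Finset.sum_pos (fun j _ => one_div_pos.2 (hp j)) Finset.univ_nonempty
  obtain ⟨ε, hε, hεσ, hε1⟩ := exists_eps p hp _ hσ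
  obtain ⟨C, hC⟩ := upper_bound hn p hp (r₀ / 2) hr b (summable_at hr hrr hTaylor) _ rfl hσ ε hεσ
    (fun α hα => hε1 α (H α hα))
  have hsub : {w : Fin n → ℂ | ∀ j, ‖w j‖ < r₀ / 2} ⊆ {w : Fin n → ℂ | ∀ j, ‖w j‖ < r₀} :=
    fun w hw j => (hw j).trans hrr
  refine ⟨_, (isOpen_polydisc (r₀ / 2)).mem_nhds (by simpa using hr₀), hsub, ?_⟩
  have hτ : 2 * (1 - ε / ∑ j, 1 / p j) < 2 := by
    have := div_pos hε hσ
    linarith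
  refine Integrable.mono' ((integrable_model (r₀ / 2) _ hτ).const_mul C) ?_ ?_
  · refine AEStronglyMeasurable.mul ?_ ?_
    · exact (((hf.continuousOn.mono hsub).norm.pow 2).aestronglyMeasurable
        (measurableSet_polydisc _))
    · exact ((measurable_psi p).neg.exp).aestronglyMeasurable
  · filter_upwards [ae_restrict_mem (measurableSet_polydisc _),
      ae_restrict_of_ae (ae_ne_zero n)] with w hw hw0
    rw [Real.norm_of_nonneg (by positivity)]
    exact hC w (f w) hw0 hw (hTaylor w (hsub hw))

lemma psi_scale {n : ℕ} (hn : 0 < n) (p : Fin n → ℝ) (hp : ∀ j, 0 < p j) (w : Fin n → ℂ)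
    (hw : ∀ j, w j ≠ 0) :
    psi p (fun j => (Real.exp (-(1 / p j)) : ℝ) • w j) = psi p w - 2 := by
  have : Nonempty (Fin n) := ⟨⟨0, hn⟩⟩
  unfold psi
  rw [ciSup_sub (Set.finite_range _).bddAbove]
  congr 1
  ext j
  have := hp j
  rw [norm_smul, Real.norm_of_nonneg (Real.exp_pos _).le,
    Real.log_mul (Real.exp_pos _).ne' (norm_ne_zero_iff.2 (hw j)), Real.log_exp]
  field_simp
  ring

lemma not_integrable {n : ℕ} (hn : 0 < n) (p : Fin n → ℝ) (hp : ∀ j, 0 < p j) (α : Fin n → ℕ)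
    (hα : ∑ j, ((α j : ℝ) + 1) / p j ≤ 1) (δ : ℝ) (hδ : 0 < δ) :
    ¬ IntegrableOn (fun w : Fin n → ℂ => ‖∏ j, w j ^ α j‖ ^ 2 * Real.exp (-psi p w))
      {w | ∀ j, ‖w j‖ < δ} volume := by
  intro hIntg
  set h : (Fin n → ℂ) → ℝ := fun w => ‖∏ j, w j ^ α j‖ ^ 2 * Real.exp (-psi p w) with hh
  have hmeas : Measurable h := by
    have := measurable_psi p
    fun_prop
  set P : Set (Fin n → ℂ) := {w | ∀ j, ‖w j‖ < δ} with hP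
  set s : Fin n → ℝ := fun j => Real.exp (-(1 / p j)) with hs
  have hs0 : ∀ j, 0 < s j := fun j => Real.exp_pos _
  have hs1 : ∀ j, s j < 1 := fun j => by
    simp only [hs, Real.exp_lt_one_iff]
    have := one_div_pos.2 (hp j)
    linarith
  set S : Set (Fin n → ℂ) := {w | ∀ j, ‖w j‖ < s j * δ} with hS
  have hSm : MeasurableSet S := by
    have : S = Set.univ.pi (fun j => Metric.ball (0 : ℂ) (s j * δ)) := by
      ext w; simp [hS]
    rw [this]
    exact MeasurableSet.univ_pi fun _ => measurableSet_ball
  have hSP : S ⊆ P := fun w hw j => (hw j).trans (by nlinarith [hs1 j])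
  set T : (Fin n → ℂ) →ₗ[ℝ] (Fin n → ℂ) :=
    LinearMap.pi (fun i ↦ (s i • (LinearMap.id : ℂ →ₗ[ℝ] ℂ)).comp (LinearMap.proj i)) with hT
  have hTapp : ∀ w, T w = fun j => s j • w j := fun w => by ext j; simp [hT]
  have hdet : LinearMap.det T = Real.exp (-(2 * ∑ j, 1 / p j)) := by
    rw [hT, LinearMap.det_pi, Finset.mul_sum, ← Finset.sum_neg_distrib, Real.exp_sum]
    refine Finset.prod_congr rfl fun j _ => ?_
    rw [LinearMap.det_smul, LinearMap.det_id, Complex.finrank_real_complex, hs, mul_one,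
      ← Real.exp_nat_mul]
    congr 1
    push_cast; ring
  have hmap := Measure.map_linearMap_addHaar_eq_smul_addHaar
    (μ := (volume : Measure (Fin n → ℂ))) (f := T) (by rw [hdet]; exact (Real.exp_pos _).ne')
  rw [hdet, ← Real.exp_neg, neg_neg, abs_of_pos (Real.exp_pos _)] at hmap
  have hTm : Measurable T := (LinearMap.continuous_of_finiteDimensional T).measurable
  have hpre : T ⁻¹' S = P := by
    ext w
    simp only [hS, hP, Set.mem_preimage, Set.mem_ofPred_eq, hTapp]
    refine forall_congr' fun j => ?_
    rw [norm_smul, Real.norm_of_nonneg (hs0 j).le, mul_lt_mul_iff_right₀ (hs0 j)]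
  have hscale : ∀ w : Fin n → ℂ, (∀ j, w j ≠ 0) →
      h (T w) = Real.exp (2 - 2 * ∑ j, (α j : ℝ) / p j) * h w := by
    intro w hw
    rw [hTapp]
    simp only [hh, hs]
    rw [psi_scale hn p hp w hw]
    have h1 : ‖∏ j, ((Real.exp (-(1 / p j)) : ℝ) • w j) ^ α j‖ =
        Real.exp (-∑ j, (α j : ℝ) / p j) * ‖∏ j, w j ^ α j‖ := by
      rw [norm_prod, norm_prod, ← Finset.sum_neg_distrib, Real.exp_sum, ← Finset.prod_mul_distrib]
      refine Finset.prod_congr rfl fun j _ => ?_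
      rw [norm_pow, norm_smul, Real.norm_of_nonneg (Real.exp_pos _).le, mul_pow,
        ← Real.exp_nat_mul, norm_pow]
      congr 2
      ring
    rw [h1, mul_pow, ← Real.exp_nat_mul]
    have h2 : Real.exp (2 - 2 * ∑ j, (α j : ℝ) / p j) =
        Real.exp ((2 : ℕ) * -∑ j, (α j : ℝ) / p j) * Real.exp 2 := by
      rw [← Real.exp_add]; congr 1; push_cast; ring
    have h3 : Real.exp (-(psi p w - 2)) = Real.exp 2 * Real.exp (-psi p w) := by
      rw [← Real.exp_add]; congr 1; ring
    rw [h2, h3]; ring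
  set H : (Fin n → ℂ) → ENNReal := fun w => ENNReal.ofReal (h w) with hH
  have hHm : Measurable H := hmeas.ennreal_ofReal
  have key : ENNReal.ofReal (Real.exp (2 * ∑ j, 1 / p j)) * ∫⁻ w in S, H w =
      ENNReal.ofReal (Real.exp (2 - 2 * ∑ j, (α j : ℝ) / p j)) * ∫⁻ w in P, H w := by
    have h1 := setLIntegral_map (μ := (volume : Measure (Fin n → ℂ))) hSm hHm hTm
    rw [hmap, hpre, Measure.restrict_smul, lintegral_smul_measure, smul_eq_mul] at h1
    rw [h1, ← lintegral_const_mul _ hHm]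
    refine lintegral_congr_ae (ae_restrict_of_ae ?_)
    filter_upwards [ae_ne_zero n] with w hw
    simp only [hH]
    rw [hscale w hw, ENNReal.ofReal_mul (Real.exp_pos _).le]
  have hle : ∫⁻ w in P, H w ≤ ∫⁻ w in S, H w := by
    have hc : Real.exp (2 * ∑ j, 1 / p j) ≤ Real.exp (2 - 2 * ∑ j, (α j : ℝ) / p j) := by
      refine Real.exp_le_exp.2 ?_
      have : ∑ j, ((α j : ℝ) + 1) / p j = ∑ j, (α j : ℝ) / p j + ∑ j, 1 / p j := by
        rw [← Finset.sum_add_distrib]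
        exact Finset.sum_congr rfl fun j _ => add_div _ _ _
      linarith
    rw [← ENNReal.mul_le_mul_iff_right (a := ENNReal.ofReal (Real.exp (2 * ∑ j, 1 / p j)))
      (by simpa using Real.exp_pos _) ENNReal.ofReal_ne_top, key]
    gcongr
  have hfin : ∫⁻ w in P, H w < ⊤ := hIntg.lintegral_lt_top
  have hsplit : (∫⁻ w in S, H w) + ∫⁻ w in P \ S, H w = ∫⁻ w in P, H w := by
    have := lintegral_inter_add_sdiff H P hSm (μ := volume)
    rwa [Set.inter_eq_right.2 hSP] at this
  have hzero : ∫⁻ w in P \ S, H w = 0 := by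
    have hSf : ∫⁻ w in S, H w ≠ ⊤ := (lt_of_le_of_lt (lintegral_mono_set hSP) hfin).ne
    have h1 : (∫⁻ w in S, H w) + ∫⁻ w in P \ S, H w ≤ (∫⁻ w in S, H w) + 0 := by
      rw [hsplit, add_zero]; exact hle
    exact le_antisymm ((ENNReal.add_le_add_iff_left hSf).1 h1) bot_le
  set O : Set (Fin n → ℂ) := Set.univ.pi (fun j => {z : ℂ | s j * δ < ‖z‖ ∧ ‖z‖ < δ}) with hO
  have hOopen : IsOpen O := by
    refine isOpen_set_pi Set.finite_univ fun j _ => ?_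
    exact (isOpen_lt continuous_const continuous_norm).inter
      (isOpen_lt continuous_norm continuous_const)
  have hOne : O.Nonempty := by
    refine Set.univ_pi_nonempty_iff.2 fun j => ?_
    have hlt : s j * δ < δ := by nlinarith [hs1 j]
    obtain ⟨y, hy1, hy2⟩ := exists_between hlt
    have hy0 : 0 < y := lt_trans (mul_pos (hs0 j) hδ) hy1
    exact ⟨(y : ℂ), by simpa [abs_of_pos hy0] using ⟨hy1, hy2⟩⟩
  have hOsub : O ⊆ Function.support H ∩ (P \ S) := by
    intro w hw
    have hw' : ∀ j, s j * δ < ‖w j‖ ∧ ‖w j‖ < δ := fun j => hw j (Set.mem_univ j)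
    have hw0 : ∀ j, w j ≠ 0 := fun j => norm_pos_iff.1 (lt_trans (mul_pos (hs0 j) hδ) (hw' j).1)
    refine ⟨?_, fun j => (hw' j).2, fun hwS => ?_⟩
    · have hpos : 0 < h w := by
        refine mul_pos (pow_pos (norm_pos_iff.2 ?_) 2) (Real.exp_pos _)
        exact Finset.prod_ne_zero_iff.2 fun j _ => pow_ne_zero _ (hw0 j)
      simpa [hH, Function.mem_support] using hpos
    · exact absurd (hwS ⟨0, hn⟩) (not_lt.2 (hw' ⟨0, hn⟩).1.le)
  have hpos : 0 < ∫⁻ w in P \ S, H w := by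
    rw [setLIntegral_pos_iff hHm]
    exact lt_of_lt_of_le (hOopen.measure_pos volume hOne) (measure_mono hOsub)
  exact hpos.ne' hzero

lemma lower_bound {n : ℕ} (r : ℝ) (hr : 0 < r) (a : (Fin n → ℕ) → ℂ)
    (hs : Summable (fun β : Fin n → ℕ => ‖a β‖ * ∏ j, r ^ (β j))) (α : Fin n → ℕ)
    (hα : a α ≠ 0) (ha : ∀ β, a β ≠ 0 → α ≤ β) :
    ∃ δ : ℝ, 0 < δ ∧ δ ≤ r ∧ ∃ c : ℝ, 0 < c ∧ ∀ (w : Fin n → ℂ) (v : ℂ), (∀ j, ‖w j‖ < δ) →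
      HasSum (fun β : Fin n → ℕ => a β * ∏ j, (w j) ^ (β j)) v →
      c * ‖∏ j, w j ^ α j‖ ≤ ‖v‖ := by
  set A := ∑' β : Fin n → ℕ, ‖a β‖ * ∏ j, r ^ (β j) with hA
  set Q := ∏ j, r ^ (α j) with hQ
  have hQ0 : 0 < Q := Finset.prod_pos fun j _ => pow_pos hr _
  have hA0 : 0 ≤ A := tsum_nonneg fun β =>
    mul_nonneg (norm_nonneg _) (Finset.prod_nonneg fun j _ => pow_nonneg hr.le _)
  have hα0 : 0 < ‖a α‖ := norm_pos_iff.2 hα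
  obtain ⟨t, ht0, ht1, htA⟩ : ∃ t : ℝ, 0 < t ∧ t ≤ 1 ∧ t * (A / Q) ≤ ‖a α‖ / 2 := by
    refine ⟨min 1 (‖a α‖ / 2 / (A / Q + 1)), lt_min one_pos (by positivity), min_le_left _ _, ?_⟩
    have h1 : min 1 (‖a α‖ / 2 / (A / Q + 1)) ≤ ‖a α‖ / 2 / (A / Q + 1) := min_le_right _ _
    have h2 : 0 ≤ A / Q := by positivity
    calc min 1 (‖a α‖ / 2 / (A / Q + 1)) * (A / Q) ≤ ‖a α‖ / 2 / (A / Q + 1) * (A / Q + 1) := by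
          gcongr; linarith
      _ = ‖a α‖ / 2 := by field_simp
  refine ⟨t * r, by positivity, by nlinarith, ‖a α‖ / 2, by positivity, ?_⟩
  intro w v hw hv
  set m := ‖∏ j, w j ^ α j‖ with hm
  classical
  have hsing : HasSum (fun β : Fin n → ℕ => if β = α then a α * ∏ j, (w j) ^ (α j) else 0)
      (a α * ∏ j, (w j) ^ (α j)) := hasSum_ite_eq α _
  have hsub := hv.sub hsing
  have hterm : ∀ β : Fin n → ℕ, ‖a β * ∏ j, (w j) ^ (β j) -
      (if β = α then a α * ∏ j, (w j) ^ (α j) else 0)‖ ≤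
      (‖a β‖ * ∏ j, r ^ (β j)) * (t / Q * m) := by
    intro β
    have hrhs : 0 ≤ (‖a β‖ * ∏ j, r ^ (β j)) * (t / Q * m) := by positivity
    by_cases hβ : β = α
    · subst hβ; simpa using hrhs
    by_cases hb : a β = 0
    · simp [hb, hβ]
    have hle := ha β hb
    have hpw : ‖∏ j, (w j) ^ (β j)‖ ≤ (∏ j, r ^ (β j)) * (t / Q * m) := by
      have h1 : ‖∏ j, (w j) ^ (β j)‖ = m * ∏ j, ‖w j‖ ^ (β j - α j) := by
        rw [hm, norm_prod, norm_prod, ← Finset.prod_mul_distrib]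
        refine Finset.prod_congr rfl fun j _ => ?_
        rw [norm_pow, norm_pow, ← pow_add, Nat.add_sub_cancel' (hle j)]
      have h2 : ∏ j, ‖w j‖ ^ (β j - α j) ≤ ∏ j, (t * r) ^ (β j - α j) :=
        Finset.prod_le_prod (fun j _ => by positivity) fun j _ =>
          pow_le_pow_left₀ (norm_nonneg _) (hw j).le _
      have h3 : ∏ j, (t * r) ^ (β j - α j) = t ^ (∑ j, (β j - α j)) * ∏ j, r ^ (β j - α j) := by
        simp_rw [mul_pow]
        rw [Finset.prod_mul_distrib, Finset.prod_pow_eq_pow_sum]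
      have h4 : ∏ j, r ^ (β j) = Q * ∏ j, r ^ (β j - α j) := by
        rw [hQ, ← Finset.prod_mul_distrib]
        refine Finset.prod_congr rfl fun j _ => ?_
        rw [← pow_add, Nat.add_sub_cancel' (hle j)]
      have h5 : t ^ (∑ j, (β j - α j)) ≤ t := by
        refine pow_le_of_le_one ht0.le ht1 ?_
        intro h0
        apply hβ
        ext j
        have := (Finset.sum_eq_zero_iff.1 h0) j (Finset.mem_univ j)
        have := hle j
        simp only at this
        omega
      have h6 : 0 ≤ ∏ j, r ^ (β j - α j) := Finset.prod_nonneg fun j _ => pow_nonneg hr.le _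
      rw [h1, h4]
      calc m * ∏ j, ‖w j‖ ^ (β j - α j) ≤ m * (t * ∏ j, r ^ (β j - α j)) := by
            refine mul_le_mul_of_nonneg_left ?_ (norm_nonneg _)
            rw [h3] at h2
            exact h2.trans (mul_le_mul_of_nonneg_right h5 h6)
        _ = _ := by field_simp
    rw [if_neg hβ, sub_zero, norm_mul, mul_assoc]
    gcongr
  have hdiff : ‖v - a α * ∏ j, (w j) ^ (α j)‖ ≤ A * (t / Q * m) := by
    rw [← hsub.tsum_eq, hA, ← tsum_mul_right]
    exact tsum_of_norm_bounded (hs.mul_right _).hasSum hterm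
  have h1 : ‖a α‖ * m ≤ ‖v‖ + ‖v - a α * ∏ j, (w j) ^ (α j)‖ := by
    rw [hm, ← norm_mul]
    have := norm_sub_le v (v - a α * ∏ j, (w j) ^ (α j))
    rwa [sub_sub_cancel] at this
  have h2 : A * (t / Q * m) = t * (A / Q) * m := by ring
  have h3 : t * (A / Q) * m ≤ ‖a α‖ / 2 * m := mul_le_mul_of_nonneg_right htA (norm_nonneg _)
  linarith

/-- coordinatewise rotation by roots of unity -/
noncomputable def rot {n N : ℕ} (ω : ℂ) (k : Fin n → Fin N) (w : Fin n → ℂ) : Fin n → ℂ :=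
  fun j => ω ^ (k j : ℕ) * w j

lemma norm_rot {n N : ℕ} {ω : ℂ} (hω : ‖ω‖ = 1) (k : Fin n → Fin N) (w : Fin n → ℂ) (j : Fin n) :
    ‖rot ω k w j‖ = ‖w j‖ := by
  simp [rot, hω]

lemma psi_rot {n N : ℕ} {ω : ℂ} (hω : ‖ω‖ = 1) (p : Fin n → ℝ) (k : Fin n → Fin N)
    (w : Fin n → ℂ) : psi p (rot ω k w) = psi p w := by
  simp only [psi, norm_rot hω]

lemma rot_preserving {n N : ℕ} {ω : ℂ} (hω : ‖ω‖ = 1) (k : Fin n → Fin N) :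
    MeasurePreserving (rot ω k) := by
  refine volume_preserving_pi (f := fun j z => ω ^ (k j : ℕ) * z) fun j => ?_
  have hc : ω ^ (k j : ℕ) ∈ Submonoid.unitSphere ℂ := by
    simp [Submonoid.unitSphere, hω]
  have h := (rotation (⟨ω ^ (k j : ℕ), hc⟩ : Circle)).measurePreserving
  exact h

lemma rot_emb {n N : ℕ} {ω : ℂ} (hω : ‖ω‖ = 1) (k : Fin n → Fin N) :
    MeasurableEmbedding (rot ω k) := by
  have hω0 : ω ≠ 0 := norm_ne_zero_iff.1 (by rw [hω]; exact one_ne_zero)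
  refine Continuous.measurableEmbedding ?_ ?_
  · unfold rot; fun_prop
  · intro w w' h
    ext j
    have := congrFun h j
    simp only [rot] at this
    exact mul_left_cancel₀ (pow_ne_zero _ hω0) this

/-- the averaged coefficient -/
noncomputable def avgCoeff {n : ℕ} (N : ℕ) (ω : ℂ) (α β : Fin n → ℕ) : ℂ :=
  ∑ k : Fin n → Fin N, ∏ j, (ω ^ (β j) * ω⁻¹ ^ (α j)) ^ (k j : ℕ)

lemma avgCoeff_eq {n : ℕ} (N : ℕ) (ω : ℂ) (α β : Fin n → ℕ) :
    avgCoeff N ω α β = ∏ j, ∑ i : Fin N, (ω ^ (β j) * ω⁻¹ ^ (α j)) ^ (i : ℕ) := by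
  classical
  rw [avgCoeff, Finset.prod_univ_sum, Fintype.piFinset_univ]

lemma avgCoeff_self {n : ℕ} (N : ℕ) (hN : N ≠ 0) (ω : ℂ) (hω : ω ≠ 0) (α : Fin n → ℕ) :
    avgCoeff N ω α α ≠ 0 := by
  rw [avgCoeff_eq]
  refine Finset.prod_ne_zero_iff.2 fun j _ => ?_
  rw [inv_pow, mul_inv_cancel₀ (pow_ne_zero _ hω)]
  simpa using hN

lemma avgCoeff_le {n : ℕ} (N : ℕ) (ω : ℂ) (hω : IsPrimitiveRoot ω N)
    (α β : Fin n → ℕ) (hα : ∀ j, α j < N) (h : avgCoeff N ω α β ≠ 0) : α ≤ β := by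
  intro j
  by_contra hlt
  rw [not_le] at hlt
  have hN : N ≠ 0 := by have := hα j; omega
  have hω0 : ω ≠ 0 := hω.ne_zero hN
  rw [avgCoeff_eq] at h
  have hj := (Finset.prod_ne_zero_iff.1 h) j (Finset.mem_univ j)
  apply hj
  set ζ := ω ^ (β j) * ω⁻¹ ^ (α j) with hζ
  have hζN : ζ ^ N = 1 := by
    rw [hζ, mul_pow, pow_right_comm ω, pow_right_comm ω⁻¹, inv_pow, hω.pow_eq_one]
    simp
  have hζ1 : ζ ≠ 1 := by
    intro h1
    rw [hζ, inv_pow, mul_inv_eq_one₀ (pow_ne_zero _ hω0)] at h1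
    have := hω.pow_inj (lt_trans hlt (hα j)) (hα j) h1
    exact hlt.ne this
  rw [Fin.sum_univ_eq_sum_range (fun i => ζ ^ i) N, geom_sum_eq hζ1, hζN]
  simp

lemma necessity (n : ℕ) (hn : 0 < n) (p : Fin n → ℝ) (hp : ∀ j, 0 < p j)
    (r₀ : ℝ) (hr₀ : 0 < r₀) (f : (Fin n → ℂ) → ℂ) (b : (Fin n → ℕ) → ℂ)
    (hTaylor : ∀ w ∈ {w : Fin n → ℂ | ∀ j, ‖w j‖ < r₀},
      HasSum (fun α : Fin n → ℕ => b α * ∏ j, (w j) ^ (α j)) (f w))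
    (U : Set (Fin n → ℂ)) (hU : U ∈ nhds (0 : Fin n → ℂ))
    (hIntg : IntegrableOn (fun w => ‖f w‖ ^ 2 * Real.exp (-psi p w)) U volume)
    (α : Fin n → ℕ) (hα : b α ≠ 0) : 1 < ∑ j, ((α j : ℝ) + 1) / p j := by
  by_contra hcon
  rw [not_lt] at hcon
  obtain ⟨ρ, hρ, hρU⟩ := Metric.mem_nhds_iff.1 hU
  set N : ℕ := ∑ j, α j + 1 with hN
  have hN0 : N ≠ 0 := by omega
  have hαN : ∀ j, α j < N := fun j => by
    have := Finset.single_le_sum (f := α) (fun _ _ => Nat.zero_le _) (Finset.mem_univ j)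
    omega
  set ω : ℂ := Complex.exp (2 * Real.pi * Complex.I / N) with hωd
  have hω : IsPrimitiveRoot ω N := Complex.isPrimitiveRoot_exp N hN0
  have hωn : ‖ω‖ = 1 := hω.norm'_eq_one hN0
  have hω0 : ω ≠ 0 := hω.ne_zero hN0
  set g : (Fin n → ℂ) → ℂ := fun w =>
    ∑ k : Fin n → Fin N, (∏ j, (ω⁻¹ ^ (α j)) ^ (k j : ℕ)) * f (rot ω k w) with hg
  have hgT : ∀ w ∈ {w : Fin n → ℂ | ∀ j, ‖w j‖ < r₀},
      HasSum (fun β : Fin n → ℕ => (avgCoeff N ω α β * b β) * ∏ j, (w j) ^ (β j)) (g w) := by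
    intro w hw
    have h1 : ∀ k ∈ (Finset.univ : Finset (Fin n → Fin N)),
        HasSum (fun β : Fin n → ℕ => (∏ j, (ω⁻¹ ^ (α j)) ^ (k j : ℕ)) *
          (b β * ∏ j, (rot ω k w j) ^ (β j)))
          ((∏ j, (ω⁻¹ ^ (α j)) ^ (k j : ℕ)) * f (rot ω k w)) := fun k _ =>
      (hTaylor _ (fun j => by rw [norm_rot hωn]; exact hw j)).mul_left _
    refine (hasSum_sum h1).congr_fun ?_
    intro β
    rw [avgCoeff, Finset.sum_mul, Finset.sum_mul]
    refine Finset.sum_congr rfl fun k _ => ?_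
    have h2 : ∏ j, (ω ^ (β j) * ω⁻¹ ^ (α j)) ^ (k j : ℕ) =
        (∏ j, (ω⁻¹ ^ (α j)) ^ (k j : ℕ)) * ∏ j, (ω ^ (k j : ℕ)) ^ (β j) := by
      rw [← Finset.prod_mul_distrib]
      refine Finset.prod_congr rfl fun j _ => ?_
      rw [mul_pow, ← pow_mul ω, ← pow_mul ω, mul_comm (β j), mul_comm]
    have h3 : ∏ j, (rot ω k w j) ^ (β j) =
        (∏ j, (ω ^ (k j : ℕ)) ^ (β j)) * ∏ j, (w j) ^ (β j) := by
      rw [← Finset.prod_mul_distrib]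
      refine Finset.prod_congr rfl fun j _ => ?_
      rw [rot, mul_pow]
    rw [h2, h3]; ring
  set r := min (r₀ / 2) ρ with hr
  have hr0 : 0 < r := lt_min (by linarith) hρ
  have hrr : r < r₀ := lt_of_le_of_lt (min_le_left _ _) (by linarith)
  obtain ⟨δ, hδ, hδr, c, hc, hlow⟩ := lower_bound r hr0 _ (summable_at hr0 hrr hgT) α
    (mul_ne_zero (avgCoeff_self N hN0 ω hω0 α) hα)
    (fun β hβ => avgCoeff_le N ω hω α β hαN (left_ne_zero_of_mul hβ))
  refine not_integrable hn p hp α hcon δ hδ ?_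
  set F : (Fin n → ℂ) → ℝ := fun w => ‖f w‖ ^ 2 * Real.exp (-psi p w) with hF
  have hsubU : {w : Fin n → ℂ | ∀ j, ‖w j‖ < δ} ⊆ U := by
    intro w hw
    refine hρU ?_
    rw [mem_ball_zero_iff, pi_norm_lt_iff hρ]
    exact fun j => (hw j).trans_le (hδr.trans (min_le_right _ _))
  have hFint : IntegrableOn F {w : Fin n → ℂ | ∀ j, ‖w j‖ < δ} := hIntg.mono_set hsubU
  have hrotint : ∀ k : Fin n → Fin N,
      IntegrableOn (F ∘ rot ω k) {w : Fin n → ℂ | ∀ j, ‖w j‖ < δ} := by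
    intro k
    have := ((rot_preserving hωn k).integrableOn_comp_preimage (rot_emb hωn k)).2 hFint
    simpa [Set.preimage, norm_rot hωn] using this
  set M : ℝ := ((Finset.card (Finset.univ : Finset (Fin n → Fin N)) : ℕ) : ℝ) with hM
  have hsumint : IntegrableOn (fun w => ∑ k : Fin n → Fin N, (F ∘ rot ω k) w)
      {w : Fin n → ℂ | ∀ j, ‖w j‖ < δ} := integrable_finsetSum _ fun k _ => hrotint k
  refine Integrable.mono' (hsumint.const_mul (M / c ^ 2)) ?_ ?_
  · have := measurable_psi p
    exact (by fun_prop : Measurable fun w : Fin n → ℂ =>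
      ‖∏ j, w j ^ α j‖ ^ 2 * Real.exp (-psi p w)).aestronglyMeasurable
  · filter_upwards [ae_restrict_mem (measurableSet_polydisc _)] with w hw
    rw [Real.norm_of_nonneg (by positivity)]
    have h1 := hlow w (g w) hw (hgT w fun j => (hw j).trans_le (hδr.trans hrr.le))
    have h2 : ‖g w‖ ≤ ∑ k : Fin n → Fin N, ‖f (rot ω k w)‖ := by
      refine (norm_sum_le _ _).trans (Finset.sum_le_sum fun k _ => ?_)
      simp [norm_prod, hωn]
    have h3 : (∑ k : Fin n → Fin N, ‖f (rot ω k w)‖) ^ 2 ≤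
        M * ∑ k : Fin n → Fin N, ‖f (rot ω k w)‖ ^ 2 := sq_sum_le_card_mul_sum_sq
    have h4 : (c * ‖∏ j, w j ^ α j‖) ^ 2 ≤ M * ∑ k : Fin n → Fin N, ‖f (rot ω k w)‖ ^ 2 :=
      (pow_le_pow_left₀ (by positivity) (h1.trans h2) 2).trans h3
    have h5 : ∑ k : Fin n → Fin N, (F ∘ rot ω k) w =
        (∑ k : Fin n → Fin N, ‖f (rot ω k w)‖ ^ 2) * Real.exp (-psi p w) := by
      rw [Finset.sum_mul]
      refine Finset.sum_congr rfl fun k _ => ?_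
      simp only [hF, Function.comp, psi_rot hωn]
    rw [h5]
    calc ‖∏ j, w j ^ α j‖ ^ 2 * Real.exp (-psi p w)
        = (c * ‖∏ j, w j ^ α j‖) ^ 2 / c ^ 2 * Real.exp (-psi p w) := by
          field_simp
      _ ≤ (M * ∑ k : Fin n → Fin N, ‖f (rot ω k w)‖ ^ 2) / c ^ 2 * Real.exp (-psi p w) := by
          gcongr
      _ = _ := by ring

theorem stmt_0 (n : ℕ) (hn : 0 < n) (p : Fin n → ℝ) (hp : ∀ j, 0 < p j)
    (r₀ : ℝ) (hr₀ : 0 < r₀) (f : (Fin n → ℂ) → ℂ) (b : (Fin n → ℕ) → ℂ)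
    (hf : DifferentiableOn ℂ f {w : Fin n → ℂ | ∀ j, ‖w j‖ < r₀})
    (hTaylor : ∀ w ∈ {w : Fin n → ℂ | ∀ j, ‖w j‖ < r₀},
      HasSum (fun α : Fin n → ℕ => b α * ∏ j, (w j) ^ (α j)) (f w)) :
    (∃ U ∈ nhds (0 : Fin n → ℂ), U ⊆ {w : Fin n → ℂ | ∀ j, ‖w j‖ < r₀} ∧
        IntegrableOn (fun w => ‖f w‖ ^ 2 * Real.exp (-psi p w)) U volume)
      ↔ ∀ α : Fin n → ℕ, b α ≠ 0 → 1 < ∑ j, ((α j : ℝ) + 1) / p j := by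
  constructor
  · rintro ⟨U, hU, -, hIntg⟩ α hα
    exact necessity n hn p hp r₀ hr₀ f b hTaylor U hU hIntg α hα
  · exact sufficiency n hn p hp r₀ hr₀ f b hf hTaylor
end

section
/- Let t₀ > 0 and let f be a holomorphic function on the polydisc {ψ < −t₀} with Taylor expansion f(w) = Σ_{α ∈ (ℤ_{≥0})ⁿ} b_α w^α. Then for every t ≥ t₀, as an equality in [0,+∞], ∫_{{ψ < −t}} |f|² dλ_n = Σ_{α ∈ (ℤ_{≥0})ⁿ} e^{−(Σ_{j=1}^n (α_j+1)/p_j) t} · |b_α|² πⁿ / Π_{j=1}^n (α_j+1). -/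
open MeasureTheory Filter

/-- The polydisc `{ψ < s} = Π_j {|w_j| < e^{s/(2 p_j)}}`. -/
noncomputable def polydisc {n : ℕ} (p : Fin n → ℝ) (s : ℝ) : Set (Fin n → ℂ) :=
  {w | ∀ j, ‖w j‖ < Real.exp (s / (2 * p j))}

/-- `qExp p α = Σ_j (α_j + 1) / p_j`. -/
noncomputable def qExp {n : ℕ} (p : Fin n → ℝ) (α : Fin n → ℕ) : ℝ :=
  ∑ j, ((α j : ℝ) + 1) / p j

lemma aux_hasSum_orthonormal {ι E : Type*} [NormedAddCommGroup E] [InnerProductSpace ℂ E]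
    {v : ι → E} (hv : Orthonormal ℂ v) {c : ι → ℂ} {x : E}
    (h : HasSum (fun i => c i • v i) x) : HasSum (fun i => ‖c i‖ ^ 2) (‖x‖ ^ 2) := by
  classical
  have h1 : ∀ j, inner ℂ (v j) x = c j := by
    intro j
    have h2 : HasSum (fun i => inner ℂ (v j) (c i • v i)) (inner ℂ (v j) x) :=
      h.mapL (innerSL ℂ (v j))
    have h3 : HasSum (fun i => inner ℂ (v j) (c i • v i)) (c j) := by
      have := hasSum_ite_eq j (c j)
      convert this using 2 with i
      rw [inner_smul_right, orthonormal_iff_ite.mp hv]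
      by_cases hij : i = j
      · simp [hij]
      · simp [hij, Ne.symm hij]
    exact h2.unique h3
  have h4 : HasSum (fun i => inner ℂ x (c i • v i)) (inner ℂ x x) := h.mapL (innerSL ℂ x)
  have h5 : ∀ i, inner ℂ x (c i • v i) = ((‖c i‖ ^ 2 : ℝ) : ℂ) := by
    intro i
    rw [inner_smul_right, ← inner_conj_symm, h1, Complex.mul_conj, Complex.normSq_eq_norm_sq]
  simp_rw [h5, inner_self_eq_norm_sq_to_K] at h4
  have h6 : HasSum (fun i => ((‖c i‖ ^ 2 : ℝ) : ℂ)) ((‖x‖ ^ 2 : ℝ) : ℂ) := by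
    simpa using h4
  exact Complex.hasSum_ofReal.1 h6

noncomputable def auxMu (n : ℕ) : Measure (UnitAddTorus (Fin n)) :=
  Measure.pi fun _ => AddCircle.haarAddCircle

instance (n : ℕ) : IsProbabilityMeasure (auxMu n) := by
  unfold auxMu; infer_instance

lemma aux_orthonormal (n : ℕ) : Orthonormal ℂ (fun k : Fin n → ℤ =>
    ContinuousMap.toLp (E := ℂ) 2 (auxMu n) ℂ (UnitAddTorus.mFourier k)) :=
  UnitAddTorus.orthonormal_mFourier

lemma aux_parseval (n : ℕ) (c : (Fin n → ℕ) → ℂ) (hc : Summable (fun α => ‖c α‖))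
    (g : UnitAddTorus (Fin n) → ℂ)
    (hg : ∀ u, HasSum (fun α => c α * UnitAddTorus.mFourier (fun j => (α j : ℤ)) u) (g u)) :
    ∫⁻ u, ENNReal.ofReal (‖g u‖ ^ 2) ∂(auxMu n) = ∑' α, ENNReal.ofReal (‖c α‖ ^ 2) := by
  have hs : Summable (fun α : Fin n → ℕ =>
      c α • UnitAddTorus.mFourier (fun j => (α j : ℤ))) := by
    apply Summable.of_norm
    simpa [norm_smul, UnitAddTorus.mFourier_norm] using hc
  obtain ⟨G, hG⟩ := hs
  have hGg : ∀ u, G u = g u := fun u => by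
    have := hG.mapL (ContinuousMap.evalCLM ℂ u)
    simp at this
    exact this.unique (hg u)
  have h2 := hG.mapL (ContinuousMap.toLp (E := ℂ) 2 (auxMu n) ℂ)
  simp only [map_smul] at h2
  have h3 := aux_hasSum_orthonormal ((aux_orthonormal n).comp
    (fun (α : Fin n → ℕ) (j : Fin n) => (α j : ℤ)) (fun a b h => by
      funext j
      have := congrFun h j
      simpa using this)) h2
  rw [← ENNReal.ofReal_tsum_of_nonneg (fun _ => by positivity) h3.summable, h3.tsum_eq]
  have h4 : (∫ u, ‖G u‖ ^ 2 ∂(auxMu n)) = ‖ContinuousMap.toLp (E := ℂ) 2 (auxMu n) ℂ G‖ ^ 2 := by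
    have := ContinuousMap.inner_toLp (𝕜 := ℂ) (auxMu n) G G
    rw [inner_self_eq_norm_sq_to_K] at this
    have h5 : ∀ u, G u * (starRingEnd ℂ) (G u) = ((‖G u‖ ^ 2 : ℝ) : ℂ) := fun u => by
      rw [Complex.mul_conj, Complex.normSq_eq_norm_sq]
    simp_rw [h5] at this
    rw [integral_complex_ofReal] at this
    apply Complex.ofReal_injective
    rw [← this]
    simp
  rw [← h4, ofReal_integral_eq_lintegral_ofReal]
  · simp_rw [hGg]
  · exact (Continuous.integrable_of_hasCompactSupport (by fun_prop)
      (HasCompactSupport.of_compactSpace _))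
  · exact Eventually.of_forall fun _ => by positivity

lemma aux_one (R : ℝ) (hR : 0 < R) (k : ℕ) :
    ∫ z in Metric.ball (0:ℂ) R, (‖z‖ ^ 2) ^ k = Real.pi * (R ^ 2) ^ (k + 1) / (k + 1) := by
  have h := integral_fun_norm_addHaar (volume : Measure ℂ) 
    (Set.indicator (Set.Iio R) (fun r : ℝ => (r ^ 2) ^ k))
  rw [← integral_indicator measurableSet_ball]
  have e : (Metric.ball (0:ℂ) R).indicator (fun z => (‖z‖ ^ 2) ^ k) =
    fun z => (Set.indicator (Set.Iio R) (fun r : ℝ => (r ^ 2) ^ k)) ‖z‖ := by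
    ext z
    by_cases hz : ‖z‖ < R <;> simp [Set.indicator, hz]
  rw [e, h]
  have e2 : ∀ y : ℝ, y ^ (Module.finrank ℝ ℂ - 1) • (Set.Iio R).indicator (fun r : ℝ => (r ^ 2) ^ k) y
     = (Set.Iio R).indicator (fun r : ℝ => r ^ (2 * k + 1)) y := by
    intro y
    by_cases hz : y < R
    · simp [Set.indicator, hz, Complex.finrank_real_complex]; ring
    · simp [Set.indicator, hz]
  simp_rw [e2]
  rw [setIntegral_indicator measurableSet_Iio, Set.Ioi_inter_Iio, ← integral_Ioc_eq_integral_Ioo,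
    ← intervalIntegral.integral_of_le hR.le, integral_pow, Measure.real, Complex.volume_ball]
  simp [Complex.finrank_real_complex]
  field_simp
  ring

lemma aux_int (R : ℝ) (k : ℕ) :
    IntegrableOn (fun z : ℂ => (‖z‖ ^ 2) ^ k) (Metric.ball (0:ℂ) R) := 
  (ContinuousOn.integrableOn_compact (isCompact_closedBall (0:ℂ) R)
    (by fun_prop)).mono_set Metric.ball_subset_closedBall

lemma aux_multi (n : ℕ) (R : Fin n → ℝ) (hR : ∀ j, 0 < R j) (α : Fin n → ℕ) (C : ℝ) (hC : 0 ≤ C) :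
    ∫⁻ w in Set.univ.pi (fun j => Metric.ball (0:ℂ) (R j)),
      ENNReal.ofReal (C * ∏ j, (‖w j‖ ^ 2) ^ (α j)) =
    ENNReal.ofReal (C * ∏ j, (Real.pi * (R j ^ 2) ^ (α j + 1) / (α j + 1))) := by
  rw [volume_pi, Measure.restrict_pi_pi, ← ofReal_integral_eq_lintegral_ofReal,
    integral_const_mul, integral_fintype_prod_eq_prod (fun j (z : ℂ) => (‖z‖ ^ 2) ^ (α j))]
  · simp_rw [aux_one _ (hR _)]
  · exact (Integrable.fintype_prod (f := fun j (z : ℂ) => (‖z‖ ^ 2) ^ (α j))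
      (fun j => aux_int (R j) (α j))).const_mul C
  · exact Eventually.of_forall fun w => by positivity

noncomputable def auxRot {n : ℕ} (u : UnitAddTorus (Fin n)) (w : Fin n → ℂ) : Fin n → ℂ :=
  fun j => (AddCircle.toCircle (u j) : ℂ) * w j

lemma auxRot_mp {n : ℕ} (u : UnitAddTorus (Fin n)) : MeasurePreserving (auxRot u) :=
  volume_preserving_pi (fun j => (rotation (AddCircle.toCircle (u j))).measurePreserving)

lemma auxRot_cont {n : ℕ} : Continuous (fun q : UnitAddTorus (Fin n) × (Fin n → ℂ) =>
    auxRot q.1 q.2) := by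
  unfold auxRot
  refine continuous_pi fun j => ?_
  have := AddCircle.continuous_toCircle (T := (1:ℝ))
  fun_prop

lemma aux_main (n : ℕ) (R : Fin n → ℝ) (hR : ∀ j, 0 < R j)
    (f : (Fin n → ℂ) → ℂ) (b : (Fin n → ℕ) → ℂ)
    (hf : ContinuousOn f (Set.univ.pi (fun j => Metric.ball (0:ℂ) (R j))))
    (hT : ∀ w ∈ Set.univ.pi (fun j => Metric.ball (0:ℂ) (R j)),
      HasSum (fun α : Fin n → ℕ => b α * ∏ j, (w j) ^ (α j)) (f w)) :
    ∫⁻ w in Set.univ.pi (fun j => Metric.ball (0:ℂ) (R j)), ENNReal.ofReal (‖f w‖ ^ 2) =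
      ∑' α, ENNReal.ofReal (‖b α‖ ^ 2 * ∏ j, (Real.pi * (R j ^ 2) ^ (α j + 1) / (α j + 1))) := by
  classical
  set D : Set (Fin n → ℂ) := Set.univ.pi (fun j => Metric.ball (0:ℂ) (R j)) with hD
  have hDm : MeasurableSet D := MeasurableSet.univ_pi fun j => measurableSet_ball
  set F : (Fin n → ℂ) → ENNReal := D.indicator (fun w => ENNReal.ofReal (‖f w‖ ^ 2)) with hF
  have hfm : Measurable (D.piecewise f 0) := hf.measurable_piecewise continuousOn_const hDm
  have hFm : Measurable F := by
    have : F = D.indicator (fun w => ENNReal.ofReal (‖D.piecewise f 0 w‖ ^ 2)) := by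
      ext w
      by_cases hw : w ∈ D <;> simp [hF, hw]
    rw [this]
    exact Measurable.indicator (by fun_prop) hDm
  have hrD : ∀ u w, auxRot u w ∈ D ↔ w ∈ D := fun u w => by
    simp [hD, auxRot, Set.mem_pi, Circle.norm_coe]
  have hrot : ∀ u, ∫⁻ w, F (auxRot u w) = ∫⁻ w, F w := fun u =>
    (auxRot_mp u).lintegral_comp hFm
  have key : ∀ w, ∫⁻ u, F (auxRot u w) ∂(auxMu n) =
      D.indicator (fun w => ∑' α, ENNReal.ofReal (‖b α‖ ^ 2 * ∏ j, (‖w j‖ ^ 2) ^ (α j))) w := by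
    intro w
    by_cases hw : w ∈ D
    · have := aux_parseval n (fun α => b α * ∏ j, (w j) ^ (α j)) (hT w hw).summable.norm
        (fun u => f (auxRot u w)) (fun u => by
          have := hT _ ((hrD u w).2 hw)
          convert this using 2 with α
          have e : ∀ j, fourier (α j : ℤ) (u j) = (AddCircle.toCircle (u j) : ℂ) ^ (α j) := by
            intro j
            simp [fourier_apply, AddCircle.toCircle_nsmul]
          simp only [UnitAddTorus.mFourier, ContinuousMap.coe_mk, e, auxRot, mul_pow,
            Finset.prod_mul_distrib]
          ring)
      simp only [hF, Set.indicator, hrD, hw, if_true]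
      rw [this]
      congr! 3 with α
      simp only [norm_mul, norm_prod, norm_pow, mul_pow, ← Finset.prod_pow]
      congr! 2
      ring
    · simp [hF, Set.indicator, hrD, hw]
  rw [← lintegral_indicator hDm]
  change ∫⁻ w, F w = _
  calc ∫⁻ w, F w = ∫⁻ u, ∫⁻ w, F (auxRot u w) ∂volume ∂(auxMu n) := by simp [hrot]
    _ = ∫⁻ w, ∫⁻ u, F (auxRot u w) ∂(auxMu n) := by
      apply lintegral_lintegral_swap
      exact (hFm.comp auxRot_cont.measurable).aemeasurable
    _ = _ := by
      simp_rw [key]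
      rw [lintegral_indicator hDm, lintegral_tsum (fun α => by
        exact (ENNReal.continuous_ofReal.comp (by fun_prop)).measurable.aemeasurable)]
      congr! 2 with α
      exact aux_multi n R hR α _ (by positivity)

theorem stmt_6 (n : ℕ) (hn : 0 < n) (p : Fin n → ℝ) (hp : ∀ j, 0 < p j)
    (t₀ : ℝ) (ht₀ : 0 < t₀) (f : (Fin n → ℂ) → ℂ) (b : (Fin n → ℕ) → ℂ)
    (hf : DifferentiableOn ℂ f (polydisc p (-t₀)))
    (hTaylor : ∀ w ∈ polydisc p (-t₀),
      HasSum (fun α : Fin n → ℕ => b α * ∏ j, (w j) ^ (α j)) (f w))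
    (t : ℝ) (ht : t₀ ≤ t) :
    (∫⁻ w in {w : Fin n → ℂ | psi p w < -t}, ENNReal.ofReal (‖f w‖ ^ 2)) =
      ∑' α : Fin n → ℕ,
        ENNReal.ofReal (Real.exp (-(qExp p α * t)) * ‖b α‖ ^ 2 * Real.pi ^ n /
          ∏ j, ((α j : ℝ) + 1)) := by
  have : Nonempty (Fin n) := ⟨⟨0, hn⟩⟩
  set R : Fin n → ℝ := fun j => Real.exp (-t / (2 * p j)) with hR
  have hsub : Set.univ.pi (fun j => Metric.ball (0:ℂ) (R j)) ⊆ polydisc p (-t₀) := by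
    intro w hw j
    have := hw j (Set.mem_univ j)
    rw [mem_ball_zero_iff] at this
    refine this.trans_le (Real.exp_le_exp.2 ?_)
    have := hp j
    gcongr
  have hne : ∀ᵐ w : Fin n → ℂ, ∀ j, w j ≠ 0 := by
    rw [ae_all_iff]
    intro j
    exact (Measure.quasiMeasurePreserving_eval (fun _ : Fin n => (volume : Measure ℂ)) j).ae
      (Measure.ae_ne volume (0:ℂ))
  have hset : {w : Fin n → ℂ | psi p w < -t} =ᵐ[volume]
      Set.univ.pi (fun j => Metric.ball (0:ℂ) (R j)) := by
    filter_upwards [hne] with w hw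
    apply propext
    change psi p w < -t ↔ w ∈ Set.univ.pi (fun j => Metric.ball (0:ℂ) (R j))
    have hlt : psi p w < -t ↔ ∀ j, 2 * p j * Real.log ‖w j‖ < -t := by
      constructor
      · intro h j
        exact (le_ciSup (f := fun j => 2 * p j * Real.log ‖w j‖)
          (Set.finite_range _).bddAbove j).trans_lt h
      · intro h
        obtain ⟨j, hj⟩ := exists_eq_ciSup_of_finite (f := fun j => 2 * p j * Real.log ‖w j‖)
        rw [psi, ← hj]
        exact h j
    rw [hlt]
    simp only [Set.mem_univ_pi, mem_ball_zero_iff, hR]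
    refine forall_congr' fun j => ?_
    have := hp j
    rw [← Real.log_lt_iff_lt_exp (norm_pos_iff.2 (hw j)), lt_div_iff₀ (by positivity), mul_comm]
  rw [setLIntegral_congr hset, aux_main n R (fun j => Real.exp_pos _) f b
    (hf.continuousOn.mono hsub) (fun w hw => hTaylor w (hsub hw))]
  congr! 2 with α
  have e1 : Real.exp (-(qExp p α * t)) = ∏ j, (R j ^ 2) ^ (α j + 1) := by
    rw [qExp, Finset.sum_mul, ← Finset.sum_neg_distrib, Real.exp_sum]
    refine Finset.prod_congr rfl fun j _ => ?_
    rw [hR]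
    simp only [← Real.exp_nat_mul]
    congr 1
    have := (hp j).ne'
    push_cast
    field_simp
  rw [e1, Finset.prod_div_distrib, Finset.prod_mul_distrib]
  rw [Finset.prod_const, Finset.card_univ, Fintype.card_fin]
  congr 1
  ring
end

section
/- Let t₀ > 0 and set E₁ := {α ∈ (ℤ_{≥0})ⁿ : Σ_{j=1}^n (α_j+1)/p_j = 1} (a finite set). Let f be a holomorphic function on the polydisc {ψ < −t₀} of the form f(w) = Σ_{α ∈ E₁} b_α w^α + g₀(w), where b_α ∈ ℂ and g₀ is a holomorphic function on {ψ < −t₀} such that |g₀|² e^{−ψ} is Lebesgue integrable on some neighborhood of the origin. Then lim_{t→+∞} e^{t} ∫_{{ψ < −t}} |f|² dλ_n = Σ_{α ∈ E₁} |b_α|² πⁿ / Π_{j=1}^n (α_j+1). -/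
open MeasureTheory Filter

lemma disc_int (r : ℝ) (hr : 0 < r) (a b : ℕ) :
    ∫ z in Metric.ball (0:ℂ) r, z ^ a * (starRingEnd ℂ z) ^ b =
      if a = b then ((Real.pi * r ^ (2 * (a + 1)) / (a + 1) : ℝ) : ℂ) else 0 := by
  rw [← integral_indicator measurableSet_ball, ← Complex.integral_comp_polarCoord_symm]
  have h1 : ∀ q ∈ polarCoord.target, q.1 • (Metric.ball (0:ℂ) r).indicator
      (fun z => z ^ a * (starRingEnd ℂ z) ^ b) (Complex.polarCoord.symm q) =
      (Set.Iio r).indicator (fun ρ : ℝ => ((ρ ^ (a + b + 1) : ℝ) : ℂ)) q.1 *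
        Complex.exp ((((a:ℂ) - b) * Complex.I) * (q.2 : ℝ)) := by
    rintro ⟨ρ, θ⟩ hq
    simp only [polarCoord_target, Set.mem_prod, Set.mem_Ioi] at hq
    have hz : Complex.polarCoord.symm (ρ, θ) = ρ * Complex.exp (θ * Complex.I) := by
      rw [Complex.polarCoord_symm_apply, Complex.exp_mul_I]; simp
    have hc : starRingEnd ℂ (ρ * Complex.exp (θ * Complex.I)) = ρ * Complex.exp (-(θ * Complex.I)) := by
      rw [map_mul, ← Complex.exp_conj]; simp
    have hn : ‖(ρ * Complex.exp (θ * Complex.I) : ℂ)‖ = ρ := by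
      rw [norm_mul, Complex.norm_exp_ofReal_mul_I]; simp [abs_of_pos hq.1]
    rw [hz]
    by_cases h : ρ < r
    · rw [Set.indicator_of_mem (by rw [mem_ball_zero_iff, hn]; exact h), Set.indicator_of_mem (by simpa using h), hc,
        mul_pow, mul_pow, ← Complex.exp_nat_mul, ← Complex.exp_nat_mul]
      have : Complex.exp ((((a:ℂ) - b) * Complex.I) * (θ : ℝ)) =
        Complex.exp (a * (θ * Complex.I)) * Complex.exp (b * -(θ * Complex.I)) := by
        rw [← Complex.exp_add]; congr 1; ring
      simp only [this, Complex.real_smul]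
      push_cast; ring
    · rw [Set.indicator_of_notMem (by rw [mem_ball_zero_iff, hn]; exact h), Set.indicator_of_notMem (by simpa using h)]
      simp
  rw [setIntegral_congr_fun polarCoord.open_target.measurableSet h1, polarCoord_target,
    Measure.volume_eq_prod,
    setIntegral_prod_mul (f := (Set.Iio r).indicator (fun ρ : ℝ => ((ρ ^ (a + b + 1) : ℝ) : ℂ)))
      (g := fun θ : ℝ => Complex.exp ((((a:ℂ) - b) * Complex.I) * θ)),
    setIntegral_indicator measurableSet_Iio, Set.Ioi_inter_Iio, integral_complex_ofReal,
    ← integral_Ioc_eq_integral_Ioo, ← integral_Ioc_eq_integral_Ioo,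
    ← intervalIntegral.integral_of_le hr.le,
    ← intervalIntegral.integral_of_le (by linarith [Real.pi_pos]), integral_pow]
  split_ifs with h
  · subst h
    simp
    have : (a:ℂ) + 1 ≠ 0 := by exact_mod_cast Nat.succ_ne_zero a
    have h2 : (a:ℂ) + a + 1 + 1 ≠ 0 := by
      have := Nat.succ_ne_zero (a + a + 1); exact_mod_cast this
    rw [show 2 * (a+1) = a + a + 1 + 1 by ring]
    rw [show (a:ℂ) + a + 1 + 1 = 2 * (a + 1) by ring]
    field_simp
    ring
  · have hab : ((a:ℂ) - b) ≠ 0 := by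
      rw [sub_ne_zero]; exact_mod_cast h
    have hab' : ((a:ℂ) - b) * Complex.I ≠ 0 := mul_ne_zero hab Complex.I_ne_zero
    rw [integral_exp_mul_complex hab']
    have : Complex.exp ((((a:ℂ) - b) * Complex.I) * (Real.pi : ℝ)) = Complex.exp ((((a:ℂ) - b) * Complex.I) * ((-Real.pi : ℝ) : ℂ)) := by
      rw [Complex.exp_eq_exp_iff_exists_int]
      refine ⟨(a:ℤ) - b, ?_⟩
      push_cast; ring
    rw [this]; simp

lemma mono_int {n : ℕ} (r : Fin n → ℝ) (hr : ∀ j, 0 < r j) (α β : Fin n → ℕ) :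
    ∫ w in Set.pi Set.univ (fun j => Metric.ball (0:ℂ) (r j)),
      (∏ j, w j ^ α j) * starRingEnd ℂ (∏ j, w j ^ β j) =
      if α = β then ((∏ j, (Real.pi * r j ^ (2 * (α j + 1)) / (α j + 1)) : ℝ) : ℂ) else 0 := by
  have : ∀ w : Fin n → ℂ, (∏ j, w j ^ α j) * starRingEnd ℂ (∏ j, w j ^ β j) =
      ∏ j, (w j ^ α j * starRingEnd ℂ (w j) ^ β j) := by
    intro w; rw [map_prod, ← Finset.prod_mul_distrib]; simp
  simp_rw [this]
  rw [volume_pi, Measure.restrict_pi_pi, integral_fintype_prod_eq_prod (f := fun j (z:ℂ) => z ^ α j * starRingEnd ℂ z ^ β j)]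
  simp_rw [disc_int _ (hr _)]
  split_ifs with h
  · subst h; simp
  · obtain ⟨j, hj⟩ := Function.ne_iff.1 h
    exact Finset.prod_eq_zero (Finset.mem_univ j) (by simp [hj])

lemma poly_integrable {n : ℕ} (r : Fin n → ℝ) (F : (Fin n → ℂ) → ℂ) (hF : Continuous F) :
    IntegrableOn F (Set.pi Set.univ (fun j => Metric.ball (0:ℂ) (r j))) := by
  refine (hF.continuousOn.integrableOn_compact (isCompact_univ_pi (s := fun j => Metric.closedBall (0:ℂ) (r j)) fun j => isCompact_closedBall _ _)).mono_set ?_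
  exact Set.pi_mono fun j _ => Metric.ball_subset_closedBall

lemma P_int {n : ℕ} (r : Fin n → ℝ) (hr : ∀ j, 0 < r j) {ι : Type*} [Fintype ι] (α : ι → Fin n → ℕ)
    (hα : Function.Injective α) (b : ι → ℂ) :
    ∫⁻ w in Set.pi Set.univ (fun j => Metric.ball (0:ℂ) (r j)),
      ENNReal.ofReal (‖∑ i, b i * ∏ j, w j ^ α i j‖ ^ 2) =
    ENNReal.ofReal (∑ i, ‖b i‖ ^ 2 * ∏ j, (Real.pi * r j ^ (2 * (α i j + 1)) / (α i j + 1))) := by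
  classical
  have hc : Continuous fun w : Fin n → ℂ => ∑ i, b i * ∏ j, w j ^ α i j := by fun_prop
  have hc2 : ∀ w : Fin n → ℂ, ((‖∑ i, b i * ∏ j, w j ^ α i j‖ ^ 2 : ℝ) : ℂ) =
      ∑ i, ∑ k, (b i * starRingEnd ℂ (b k)) * ((∏ j, w j ^ α i j) * starRingEnd ℂ (∏ j, w j ^ α k j)) := by
    intro w
    push_cast
    rw [← Complex.mul_conj', map_sum, Finset.sum_mul_sum]
    refine Finset.sum_congr rfl fun i _ => Finset.sum_congr rfl fun k _ => ?_
    rw [map_mul]; ring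
  have hI := poly_integrable r (fun w => ((‖∑ i, b i * ∏ j, w j ^ α i j‖ ^ 2 : ℝ) : ℂ)) (by fun_prop)
  have hI' : IntegrableOn (fun w : Fin n → ℂ => ‖∑ i, b i * ∏ j, w j ^ α i j‖ ^ 2) (Set.pi Set.univ (fun j => Metric.ball (0:ℂ) (r j))) := by
    exact hI.re
  rw [← ofReal_integral_eq_lintegral_ofReal hI' (ae_of_all _ fun w => by positivity)]
  congr 1
  apply Complex.ofReal_injective
  rw [← integral_complex_ofReal]
  simp_rw [hc2]
  rw [integral_finsetSum _ fun i _ => poly_integrable r _ (by fun_prop)]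
  simp_rw [fun i => integral_finsetSum (μ := volume.restrict (Set.pi Set.univ (fun j => Metric.ball (0:ℂ) (r j)))) Finset.univ (f := fun k (w : Fin n → ℂ) => (b i * starRingEnd ℂ (b k)) * ((∏ j, w j ^ α i j) * starRingEnd ℂ (∏ j, w j ^ α k j))) fun k _ => poly_integrable r _ (by fun_prop)]
  simp_rw [integral_const_mul, mono_int r hr, hα.eq_iff]
  simp [Complex.mul_conj']

lemma polydisc_eq_s7 {n : ℕ} (p : Fin n → ℝ) (s : ℝ) :
    polydisc p s = Set.pi Set.univ (fun j => Metric.ball (0:ℂ) (Real.exp (s / (2 * p j)))) := by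
  ext w; simp [polydisc]

lemma psi_lt_iff {n : ℕ} (hn : 0 < n) (p : Fin n → ℝ) (hp : ∀ j, 0 < p j) (s : ℝ)
    (w : Fin n → ℂ) (hw : ∀ j, w j ≠ 0) : psi p w < s ↔ w ∈ polydisc p s := by
  have : Nonempty (Fin n) := ⟨⟨0, hn⟩⟩
  have h1 : psi p w < s ↔ ∀ j, 2 * p j * Real.log ‖w j‖ < s := by
    constructor
    · intro h j
      exact lt_of_le_of_lt (le_ciSup (f := fun j => 2 * p j * Real.log ‖w j‖) (Set.finite_range _).bddAbove j) h
    · intro h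
      obtain ⟨j, hj⟩ := exists_eq_ciSup_of_finite (f := fun j => 2 * p j * Real.log ‖w j‖)
      unfold psi
      rw [← hj]; exact h j
  rw [h1]
  refine forall_congr' fun j => ?_
  have h2 : 0 < 2 * p j := by linarith [hp j]
  rw [← Real.log_lt_iff_lt_exp (norm_pos_iff.2 (hw j)), lt_div_iff₀ h2, mul_comm]

lemma set_ae {n : ℕ} (hn : 0 < n) (p : Fin n → ℝ) (hp : ∀ j, 0 < p j) (s : ℝ) :
    {w : Fin n → ℂ | psi p w < s} =ᵐ[volume] polydisc p s := by
  filter_upwards [ae_ne_zero n] with w hw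
  exact propext (psi_lt_iff hn p hp s w hw)

lemma polydisc_meas {n : ℕ} (p : Fin n → ℝ) (s : ℝ) : MeasurableSet (polydisc p s) := by
  rw [polydisc_eq_s7]
  exact MeasurableSet.univ_pi fun j => measurableSet_ball

lemma polydisc_mono {n : ℕ} (p : Fin n → ℝ) (hp : ∀ j, 0 < p j) {s t : ℝ} (h : s ≤ t) :
    polydisc p s ⊆ polydisc p t := by
  intro w hw j
  have h2 : 0 < 2 * p j := by linarith [hp j]
  exact (hw j).trans_le (Real.exp_le_exp.2 (div_le_div_of_nonneg_right h h2.le))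

lemma finite_E {n : ℕ} (p : Fin n → ℝ) (hp : ∀ j, 0 < p j) :
    Finite {α : Fin n → ℕ // qExp p α = 1} := by
  refine Set.Finite.to_subtype (s := {α : Fin n → ℕ | qExp p α = 1}) ?_
  refine (Set.Finite.pi' (t := fun j => Set.Iic ⌈p j⌉₊) fun j => Set.finite_Iic _).subset ?_
  intro α hα j
  have h0 : ∀ i ∈ Finset.univ, 0 ≤ ((α i : ℝ) + 1) / p i := fun i _ => by
    have := hp i; positivity
  have := Finset.single_le_sum h0 (Finset.mem_univ j)
  have h1 : ((α j : ℝ) + 1) / p j ≤ 1 := this.trans_eq hα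
  rw [div_le_one (hp j)] at h1
  have h2 := Nat.le_ceil (p j)
  simp only [Set.mem_Iic]
  exact_mod_cast (by linarith : (α j : ℝ) ≤ ⌈p j⌉₊)

lemma r_tendsto (c : ℝ) (hc : 0 < c) : Tendsto (fun t : ℝ => Real.exp (-t / c)) atTop (nhds 0) := by
  refine Real.tendsto_exp_atBot.comp ?_
  exact (tendsto_neg_atTop_atBot).atBot_div_const hc

lemma vol_tendsto {n : ℕ} (hn : 0 < n) (p : Fin n → ℝ) (hp : ∀ j, 0 < p j) :
    Tendsto (fun t : ℝ => volume (polydisc p (-t))) atTop (nhds 0) := by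
  have h : ∀ t : ℝ, volume (polydisc p (-t)) =
      ENNReal.ofReal (∏ j, (Real.exp (-t / (2 * p j)) ^ 2 * Real.pi)) := by
    intro t
    rw [polydisc_eq_s7, volume_pi_pi, ENNReal.ofReal_prod_of_nonneg (fun i _ => by positivity)]
    refine Finset.prod_congr rfl fun j _ => ?_
    rw [Complex.volume_ball, ENNReal.ofReal_mul (by positivity), ENNReal.ofReal_pow (by positivity)]
    congr 1
    rw [← NNReal.coe_real_pi, ENNReal.ofReal_coe_nnreal]
  simp_rw [h]
  rw [← ENNReal.ofReal_zero]
  refine ENNReal.tendsto_ofReal ?_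
  have : (0:ℝ) = ∏ j : Fin n, ((0:ℝ) ^ 2 * Real.pi) := by
    rw [Finset.prod_eq_zero (Finset.mem_univ ⟨0, hn⟩) (by simp)]
  rw [this]
  exact tendsto_finsetProd _ fun j _ =>
    ((r_tendsto _ (by linarith [hp j])).pow 2).mul_const _

lemma polydisc_sub {n : ℕ} (p : Fin n → ℝ) (hp : ∀ j, 0 < p j) (U : Set (Fin n → ℂ))
    (hU : U ∈ nhds (0 : Fin n → ℂ)) : ∀ᶠ t : ℝ in atTop, polydisc p (-t) ⊆ U := by
  obtain ⟨ε, hε, hs⟩ := Metric.mem_nhds_iff.1 hU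
  have : ∀ᶠ t : ℝ in atTop, ∀ j, Real.exp (-t / (2 * p j)) < ε := by
    rw [eventually_all]
    intro j
    exact (r_tendsto _ (by linarith [hp j])).eventually_lt_const hε
  filter_upwards [this] with t ht w hw
  apply hs
  rw [mem_ball_zero_iff, pi_norm_lt_iff hε]
  exact fun j => (hw j).trans (ht j)

lemma norm_eq {X : Type*} [MeasurableSpace X] (μ : Measure X) (c : ENNReal) (h : X → ℂ) :
    eLpNorm h 2 (c • μ) ^ 2 = c * ∫⁻ w, ENNReal.ofReal (‖h w‖ ^ 2) ∂μ := by
  have := eLpNorm_nnreal_pow_eq_lintegral (μ := c • μ) (f := h) (p := 2) (by norm_num)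
  simp only [NNReal.coe_ofNat, ENNReal.rpow_ofNat, ENNReal.coe_ofNat] at this
  rw [this, lintegral_smul_measure, smul_eq_mul]
  congr 1
  refine lintegral_congr fun w => ?_
  rw [ENNReal.ofReal_pow (norm_nonneg _), ofReal_norm]

theorem stmt_7 (n : ℕ) (hn : 0 < n) (p : Fin n → ℝ) (hp : ∀ j, 0 < p j)
    (t₀ : ℝ) (ht₀ : 0 < t₀) (f g₀ : (Fin n → ℂ) → ℂ) (b : (Fin n → ℕ) → ℂ)
    (hf : DifferentiableOn ℂ f (polydisc p (-t₀)))
    (hg₀ : DifferentiableOn ℂ g₀ (polydisc p (-t₀)))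
    (hform : ∀ w ∈ polydisc p (-t₀),
      f w = (∑' α : {α : Fin n → ℕ // qExp p α = 1}, b α.1 * ∏ j, (w j) ^ (α.1 j)) + g₀ w)
    (hint : ∃ U ∈ nhds (0 : Fin n → ℂ), U ⊆ polydisc p (-t₀) ∧
      IntegrableOn (fun w => ‖g₀ w‖ ^ 2 * Real.exp (-psi p w)) U volume) :
    Filter.Tendsto (fun t : ℝ =>
        ENNReal.ofReal (Real.exp t) *
          ∫⁻ w in {w : Fin n → ℂ | psi p w < -t}, ENNReal.ofReal (‖f w‖ ^ 2))
      Filter.atTop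
      (nhds (∑' α : {α : Fin n → ℕ // qExp p α = 1},
        ENNReal.ofReal (‖b α.1‖ ^ 2 * Real.pi ^ n / ∏ j, ((α.1 j : ℝ) + 1)))) := by
  have := finite_E p hp
  have := Fintype.ofFinite {α : Fin n → ℕ // qExp p α = 1}
  simp_rw [fun t : ℝ => setLIntegral_congr (μ := volume) (f := fun w => ENNReal.ofReal (‖f w‖ ^ 2)) (set_ae hn p hp (-t))]
  set P : (Fin n → ℂ) → ℂ := fun w => ∑ α : {α : Fin n → ℕ // qExp p α = 1},
    b α.1 * ∏ j, (w j) ^ (α.1 j) with hP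
  set L := ∑' α : {α : Fin n → ℕ // qExp p α = 1},
        ENNReal.ofReal (‖b α.1‖ ^ 2 * Real.pi ^ n / ∏ j, ((α.1 j : ℝ) + 1)) with hL
  have hLtop : L ≠ ⊤ := by
    rw [hL, tsum_fintype]
    exact ENNReal.sum_ne_top.2 fun _ _ => ENNReal.ofReal_ne_top
  let μ : ℝ → Measure (Fin n → ℂ) := fun t =>
    ENNReal.ofReal (Real.exp t) • volume.restrict (polydisc p (-t))
  have hPL : ∀ t, eLpNorm P 2 (μ t) ^ 2 = L := by
    intro t
    rw [norm_eq, polydisc_eq_s7, hP, P_int _ (fun j => Real.exp_pos _) (fun α : {α : Fin n → ℕ // qExp p α = 1} => α.1)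
      Subtype.val_injective (fun α => b α.1), ← ENNReal.ofReal_mul (Real.exp_pos _).le, hL, tsum_fintype,
      ← ENNReal.ofReal_sum_of_nonneg (fun i _ => by positivity), Finset.mul_sum]
    congr 1
    refine Finset.sum_congr rfl fun α _ => ?_
    have : ∏ j, Real.exp (-t / (2 * p j)) ^ (2 * (α.1 j + 1)) = Real.exp (-t) := by
      simp_rw [← Real.exp_nat_mul]
      rw [← Real.exp_sum]
      congr 1
      have h1 := α.2
      unfold qExp at h1
      refine Eq.trans ?_ ((congrArg (fun x => -t * x) h1).trans (mul_one _))
      rw [Finset.mul_sum]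
      refine Finset.sum_congr rfl fun j _ => ?_
      have := (hp j).ne'
      push_cast
      field_simp
    rw [Finset.prod_div_distrib, Finset.prod_mul_distrib, this]
    simp only [Finset.prod_const, Finset.card_univ, Fintype.card_fin]
    have h2 : Real.exp t * Real.exp (-t) = 1 := by rw [← Real.exp_add]; simp
    linear_combination (‖b α.1‖ ^ 2 * Real.pi ^ n / ∏ j, ((α.1 j : ℝ) + 1)) * h2
  have hgC : Tendsto (fun t => eLpNorm g₀ 2 (μ t) ^ 2) atTop (nhds 0) := by
    obtain ⟨U, hU, -, hint⟩ := hint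
    have hfin : ∫⁻ w in U, ENNReal.ofReal (‖g₀ w‖ ^ 2 * Real.exp (-psi p w)) ≠ ⊤ :=
      ((hasFiniteIntegral_iff_ofReal (ae_of_all _ fun w => by positivity)).1 hint.2).ne
    have hv : Tendsto (fun t : ℝ => (volume.restrict U) (polydisc p (-t))) atTop (nhds 0) :=
      tendsto_of_tendsto_of_tendsto_of_le_of_le tendsto_const_nhds (vol_tendsto hn p hp)
        (fun _ => zero_le) (fun t => Measure.restrict_apply_le _ _)
    have h0 := tendsto_setLIntegral_zero hfin hv
    refine tendsto_of_tendsto_of_tendsto_of_le_of_le' tendsto_const_nhds h0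
      (Eventually.of_forall fun _ => zero_le) ?_
    filter_upwards [polydisc_sub p hp U hU] with t ht
    rw [norm_eq, Measure.restrict_restrict (polydisc_meas p _), Set.inter_eq_left.2 ht,
      ← lintegral_const_mul' _ _ ENNReal.ofReal_ne_top]
    refine lintegral_mono_ae ?_
    filter_upwards [ae_restrict_mem (polydisc_meas p _), ae_restrict_of_ae (ae_ne_zero n)] with w hw hw0
    rw [← ENNReal.ofReal_mul (Real.exp_pos _).le, mul_comm]
    refine ENNReal.ofReal_le_ofReal ?_
    have := (psi_lt_iff hn p hp _ w hw0).2 hw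
    gcongr
    linarith
  have hroot : ∀ x : ENNReal, (x ^ 2) ^ (1 / 2 : ℝ) = x := by
    intro x
    rw [← ENNReal.rpow_natCast, ← ENNReal.rpow_mul]; norm_num
  have hC : Tendsto (fun t => eLpNorm g₀ 2 (μ t)) atTop (nhds 0) := by
    have := hgC.ennrpow_const (1 / 2 : ℝ)
    simp only [hroot] at this
    simpa using this
  set B := L ^ (1 / 2 : ℝ) with hB
  have hPB : ∀ t, eLpNorm P 2 (μ t) = B := fun t => by rw [hB, ← hPL t, hroot]
  have hBtop : B ≠ ⊤ := ENNReal.rpow_ne_top_of_nonneg (by norm_num) hLtop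
  have hBL : B ^ 2 = L := by rw [← hPB 0, hPL]
  have hPc : Continuous P := by fun_prop
  have key : ∀ᶠ t in atTop, eLpNorm f 2 (μ t) ≤ B + eLpNorm g₀ 2 (μ t) ∧
      B - eLpNorm g₀ 2 (μ t) ≤ eLpNorm f 2 (μ t) := by
    filter_upwards [eventually_ge_atTop t₀] with t ht
    have hsub := polydisc_mono p hp (neg_le_neg ht)
    have hfm : AEStronglyMeasurable f (μ t) :=
      ((hf.continuousOn.mono hsub).aestronglyMeasurable (polydisc_meas p _)).smul_measure _
    have hgm : AEStronglyMeasurable g₀ (μ t) :=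
      ((hg₀.continuousOn.mono hsub).aestronglyMeasurable (polydisc_meas p _)).smul_measure _
    have hae : ∀ᵐ w ∂(μ t), f w = P w + g₀ w := by
      refine Measure.ae_smul_measure ?_ _
      filter_upwards [ae_restrict_mem (polydisc_meas p _)] with w hw
      rw [hform w (hsub hw), tsum_fintype]
    constructor
    · rw [← hPB t, eLpNorm_congr_ae (g := P + g₀) hae]
      exact eLpNorm_add_le hPc.aestronglyMeasurable hgm (by norm_num)
    · rw [tsub_le_iff_right, ← hPB t, eLpNorm_congr_ae (f := P) (g := f - g₀) (by
        filter_upwards [hae] with w hw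
        simp [hw])]
      exact eLpNorm_sub_le hfm hgm (by norm_num)
  have hA : Tendsto (fun t => eLpNorm f 2 (μ t)) atTop (nhds B) := by
    refine tendsto_of_tendsto_of_tendsto_of_le_of_le'
      (g := fun t => B - eLpNorm g₀ 2 (μ t)) (h := fun t => B + eLpNorm g₀ 2 (μ t)) ?_ ?_
      (key.mono fun _ h => h.2) (key.mono fun _ h => h.1)
    · simpa using ENNReal.Tendsto.sub (tendsto_const_nhds (x := B)) hC (Or.inl hBtop)
    · simpa using (tendsto_const_nhds (x := B)).add hC
  have hA2 := ENNReal.Tendsto.pow (n := 2) hA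
  rw [hBL] at hA2
  refine hA2.congr fun t => ?_
  exact norm_eq _ _ _
end

section
/- Let t₀ > 0 and let g₀ be a holomorphic function on the polydisc {ψ < −t₀} whose Taylor expansion g₀(w) = Σ_{α} b̃_α w^α satisfies Σ_{j=1}^n (α_j+1)/p_j > 1 for every multi-index α with b̃_α ≠ 0. Then lim_{t→+∞} e^{t} ∫_{{ψ < −t}} |g₀|² dλ_n = 0. -/
open MeasureTheory Filter

lemma polydisc_eq_pi {n : ℕ} (p : Fin n → ℝ) (s : ℝ) :
    polydisc p s = Set.univ.pi (fun j => Metric.ball (0 : ℂ) (Real.exp (s / (2 * p j)))) := by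
  ext w
  simp [polydisc, Set.mem_pi]

lemma volume_polydisc {n : ℕ} (p : Fin n → ℝ) (s : ℝ) :
    volume (polydisc p s) = ENNReal.ofReal (Real.exp (s * ∑ j, 1 / p j) * Real.pi ^ n) := by
  rw [polydisc_eq_pi, volume_pi_pi]
  simp only [Complex.volume_ball]
  have h : ∀ j, ENNReal.ofReal (Real.exp (s / (2 * p j))) ^ 2 * (NNReal.pi : ENNReal)
      = ENNReal.ofReal (Real.exp (s * (1 / p j)) * Real.pi) := by
    intro j
    rw [ENNReal.ofReal_mul (Real.exp_pos _).le, ← ENNReal.ofReal_pow (Real.exp_pos _).le,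
      ← Real.exp_nat_mul]
    congr 1
    · congr 2
      push_cast
      rw [div_eq_mul_inv, mul_inv]; ring
    · rw [← NNReal.coe_real_pi, ENNReal.ofReal_coe_nnreal]
  simp only [h]
  rw [← ENNReal.ofReal_prod_of_nonneg (fun j _ => by positivity)]
  congr 1
  rw [Finset.prod_mul_distrib, ← Real.exp_sum, Finset.mul_sum]
  simp

lemma psi_sub {n : ℕ} (p : Fin n → ℝ) (hp : ∀ j, 0 < p j) (t : ℝ) (ht : 0 < t) :
    {w : Fin n → ℂ | psi p w < -t} ⊆ polydisc p (-t) := by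
  intro w hw j
  have h1 : 2 * p j * Real.log ‖w j‖ ≤ psi p w :=
    le_ciSup (f := fun j => 2 * p j * Real.log ‖w j‖) (Set.finite_range _).bddAbove j
  have h2 : 2 * p j * Real.log ‖w j‖ < -t := lt_of_le_of_lt h1 hw
  have hpj := hp j
  by_cases h0 : w j = 0
  · simp [h0, Real.exp_pos]
  · rw [← Real.log_lt_iff_lt_exp (norm_pos_iff.2 h0), lt_div_iff₀ (by positivity)]
    linarith

theorem stmt_8 (n : ℕ) (hn : 0 < n) (p : Fin n → ℝ) (hp : ∀ j, 0 < p j)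
    (t₀ : ℝ) (ht₀ : 0 < t₀) (g₀ : (Fin n → ℂ) → ℂ) (b : (Fin n → ℕ) → ℂ)
    (hg₀ : DifferentiableOn ℂ g₀ (polydisc p (-t₀)))
    (hTaylor : ∀ w ∈ polydisc p (-t₀),
      HasSum (fun α : Fin n → ℕ => b α * ∏ j, (w j) ^ (α j)) (g₀ w))
    (hcoef : ∀ α : Fin n → ℕ, b α ≠ 0 → 1 < ∑ j, ((α j : ℝ) + 1) / p j) :
    Filter.Tendsto (fun t : ℝ =>
        ENNReal.ofReal (Real.exp t) *
          ∫⁻ w in {w : Fin n → ℂ | psi p w < -t}, ENNReal.ofReal (‖g₀ w‖ ^ 2))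
      Filter.atTop (nhds 0) := by
  set t₁ := t₀ + 1 with ht₁
  let A : (Fin n → ℕ) → ℝ := fun α => ‖b α‖ * ∏ j, Real.exp (-t₁ / (2 * p j)) ^ (α j)
  have hA0 : ∀ α, 0 ≤ A α := fun α => by positivity
  have hmono : ∀ s t : ℝ, s < t → ∀ j, Real.exp (-t / (2 * p j)) < Real.exp (-s / (2 * p j)) := by
    intro s t hst j
    have := hp j
    apply Real.exp_lt_exp.2
    gcongr
  have hAs : Summable A := by
    have h := (hTaylor (fun j => (Real.exp (-t₁ / (2 * p j)) : ℂ)) (by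
      intro j
      have : ‖((Real.exp (-t₁ / (2 * p j)) : ℝ) : ℂ)‖ = Real.exp (-t₁ / (2 * p j)) := by
        rw [Complex.norm_real, Real.norm_eq_abs, abs_of_pos (Real.exp_pos _)]
      have h2 := hmono t₀ t₁ (by linarith) j
      exact lt_of_eq_of_lt this h2)).summable.norm
    refine h.congr fun α => ?_
    simp only [A, norm_mul, norm_prod, norm_pow]
    congr 1
    refine Finset.prod_congr rfl fun j _ => ?_
    congr 1
    rw [Complex.norm_real, Real.norm_eq_abs, abs_of_pos (Real.exp_pos _)]
  let c : (Fin n → ℕ) → ℝ := fun α => ∑ j, ((α j : ℝ) + 1) / p j - 1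
  let S : ℝ → ℝ := fun t => ∑' α, A α * Real.exp (-((t - t₁) / 2) * c α)
  have hS : Tendsto S atTop (nhds 0) := by
    have := tendsto_tsum_of_dominated_convergence (𝓕 := atTop)
      (f := fun (t : ℝ) α => A α * Real.exp (-((t - t₁) / 2) * c α)) (g := fun _ => (0:ℝ))
      hAs (by
        intro α
        by_cases hb : b α = 0
        · simp [A, hb]
        · have hc : 0 < c α := by have := hcoef α hb; simp only [c]; linarith
          rw [← mul_zero (A α)]
          apply Tendsto.const_mul
          apply Real.tendsto_exp_atBot.comp
          apply Tendsto.atBot_mul_const hc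
          apply tendsto_neg_atTop_atBot.comp
          apply Tendsto.atTop_div_const (by norm_num)
          exact tendsto_atTop_add_const_right _ (-t₁) tendsto_id)
      (by
        filter_upwards [eventually_ge_atTop t₁] with t ht α
        rw [Real.norm_eq_abs, abs_of_nonneg (mul_nonneg (hA0 α) (Real.exp_pos _).le)]
        by_cases hb : b α = 0
        · simp [A, hb]
        · have hc : 0 < c α := by have := hcoef α hb; simp only [c]; linarith
          apply mul_le_of_le_one_right (hA0 α)
          apply Real.exp_le_one_iff.2
          have : 0 ≤ (t - t₁) / 2 := by linarith
          nlinarith [mul_nonneg this hc.le])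
    rw [tsum_zero] at this
    exact this
  set P : ℝ := ∑ j, 1 / p j with hP
  set K : ℝ := Real.exp (t₁ * (1 - P)) * Real.pi ^ n with hK
  have hlim : Tendsto (fun t => ENNReal.ofReal (K * S t ^ 2)) atTop (nhds 0) := by
    have := ENNReal.tendsto_ofReal ((hS.pow 2).const_mul K)
    simpa using this
  refine tendsto_of_tendsto_of_tendsto_of_le_of_le' tendsto_const_nhds hlim
    (Eventually.of_forall fun _ => bot_le) ?_
  filter_upwards [eventually_ge_atTop t₁] with t ht
  let E : (Fin n → ℕ) → ℝ := fun α => Real.exp (-(t - t₁) / 2 * ∑ j, (α j : ℝ) / p j)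
  have hE1 : ∀ α, E α ≤ 1 := by
    intro α
    apply Real.exp_le_one_iff.2
    have : 0 ≤ ∑ j, (α j : ℝ) / p j := Finset.sum_nonneg fun j _ => by
      have := hp j; positivity
    nlinarith
  have hAE : Summable fun α => A α * E α :=
    Summable.of_nonneg_of_le (fun α => mul_nonneg (hA0 α) (Real.exp_pos _).le)
      (fun α => mul_le_of_le_one_right (hA0 α) (hE1 α)) hAs
  let M : ℝ := ∑' α, A α * E α
  have hSM : S t = Real.exp ((t - t₁) / 2 * (1 - P)) * M := by
    simp only [S, M]
    rw [← tsum_mul_left]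
    congr 1; ext α
    rw [mul_left_comm, ← Real.exp_add]
    congr 2
    simp only [c, hP, add_div, Finset.sum_add_distrib]
    ring
  have hterm : ∀ α, ‖b α‖ * ∏ j, Real.exp (-t / (2 * p j)) ^ (α j) = A α * E α := by
    intro α
    simp only [A, E]
    rw [mul_assoc, Finset.mul_sum, Real.exp_sum, ← Finset.prod_mul_distrib]
    congr 1
    refine Finset.prod_congr rfl fun j _ => ?_
    rw [← Real.exp_nat_mul, ← Real.exp_nat_mul, ← Real.exp_add]
    congr 1
    have := (hp j).ne'
    field_simp
    ring
  have hbound : ∀ w ∈ polydisc p (-t), ‖g₀ w‖ ≤ M := by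
    intro w hw
    have hw0 : w ∈ polydisc p (-t₀) := fun j =>
      (hw j).trans (hmono t₀ t (by linarith) j)
    rw [← (hTaylor w hw0).tsum_eq]
    refine tsum_of_norm_bounded hAE.hasSum fun α => ?_
    rw [← hterm α, norm_mul, norm_prod]
    gcongr with j
    rw [norm_pow]
    gcongr
    exact (hw j).le
  have hmeas : MeasurableSet (polydisc p (-t)) := by
    rw [polydisc_eq_pi]
    exact MeasurableSet.univ_pi fun j => measurableSet_ball
  calc _ ≤ ENNReal.ofReal (Real.exp t) *
          ∫⁻ w in polydisc p (-t), ENNReal.ofReal (M ^ 2) := by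
        refine mul_le_mul_right ?_ _
        refine (lintegral_mono_set (psi_sub p hp t (by linarith))).trans ?_
        refine setLIntegral_mono' hmeas fun w hw => ?_
        have := hbound w hw
        gcongr
    _ = ENNReal.ofReal (K * S t ^ 2) := by
        rw [setLIntegral_const, volume_polydisc, ← ENNReal.ofReal_mul (by positivity),
          ← ENNReal.ofReal_mul (by positivity)]
        congr 1
        rw [hSM, hK, mul_pow, ← Real.exp_nat_mul, ← hP]
        have : Real.exp t * Real.exp (-t * P) = Real.exp (t₁ * (1 - P)) *
            Real.exp ((2:ℕ) * ((t - t₁) / 2 * (1 - P))) := by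
          rw [← Real.exp_add, ← Real.exp_add]
          congr 1
          push_cast
          ring
        linear_combination (M ^ 2 * Real.pi ^ n) * this
    _ ≤ _ := le_rfl
end
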